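/- Let E be a G-invariant compact subset of ℝ^d and u a κ-harmonic function in ℝ^{d+1}₊. If, for some a > 0, |u(x,y)| ≤ 1 for all (x,y) ∈ ∪_{x⁰∈E} Γ_a^2(x⁰), then for almost every x ∈ E, u(t,y) converges to a finite limit as (t,y) ∈ Γ_a(x) tends to (x,0). -/

import Mathlib

/-!
Almost every point is regular, and near a regular point the function `W(x) = ∏ |⟨α, x⟩| ^ κ(α)` is
smooth and positive. Multiplication by `W` removes the first order term of `Δ_κ`: if `u` is
`κ`-harmonic, then `Δ(W u)` is the sum of `u Δ W` and `2 W ∑ κ(α) (u - u ∘ σ_α) / ⟨α, x⟩²`. As `E`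
is `G`-invariant, `u ∘ σ_α` is bounded on the union of the cones along with `u`, so `v = W u` and
`Δ v` are both bounded on the part of this union over a small ball. Limits of `v` are those of `u`
multiplied by `W`, so that it remains to run Calderón's argument for `v`.

Let `F` be compact and let `v` and `Δ v` be bounded on the sawtooth region
`{dist(t, F) < a y, 0 < y < 2 h}`. For `ε > 0`, compare `v(·, · + ε)` with the Poisson integral of
its own values at height `ε`. The difference is dominated by `C (1 - P 1_F + y)`: the first part is
bounded below on the lateral boundary and the second one on the top, while subtracting a multiple of
`y²` absorbs the Laplacian of `v`, so that the maximum principle applies. Letting `ε → 0` along an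
ultrafilter for which the boundary values converge weakly to some bounded `ψ` gives
`|v - P ψ| ≤ C (1 - P 1_F + y)`, and by Fatou's theorem the right side tends to `0` and `P ψ` tends
to `ψ(x)` within the cone at almost every `x ∈ F`.
-/

open MeasureTheory Filter Metric
open scoped RealInnerProductSpace Topology

noncomputable section

/-- Euclidean space `ℝ^d`. -/
abbrev Ed (d : ℕ) : Type := EuclideanSpace ℝ (Fin d)

/-- The reflection `σ_α(x) = x - ⟨α,x⟩α` (for roots normalized by `⟨α,α⟩ = 2`). -/
def reflAt {d : ℕ} (α x : Ed d) : Ed d := x - ⟪α, x⟫ • α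

/-- The reflection group `G` generated by the reflections `σ_α`, `α ∈ R`, realized as the
submonoid of self-maps of `ℝ^d` generated by the reflections (each reflection is an
involution, so this is in fact a group of transformations). -/
def dunklGroup {d : ℕ} (R : Finset (Ed d)) : Submonoid (Function.End (Ed d)) :=
  Submonoid.closure {f : Function.End (Ed d) | ∃ α ∈ R, f = reflAt α}

/-- A (normalized) root system `R` with positive subsystem `Rp` and
`G`-invariant nonnegative multiplicity function `κ`. -/
structure IsRootSystem {d : ℕ} (R Rp : Finset (Ed d)) (κ : Ed d → ℝ) : Prop where
  nonzero : ∀ α ∈ R, α ≠ (0 : Ed d)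
  norm_two : ∀ α ∈ R, ⟪α, α⟫ = (2 : ℝ)
  refl_mem : ∀ α ∈ R, ∀ β ∈ R, reflAt α β ∈ R
  pos_sub : Rp ⊆ R
  pos_split : ∀ α ∈ R, (α ∈ Rp ∧ ¬(-α ∈ Rp)) ∨ (¬(α ∈ Rp) ∧ -α ∈ Rp)
  kappa_nonneg : ∀ α ∈ R, 0 ≤ κ α
  kappa_inv : ∀ σ ∈ dunklGroup R, ∀ α ∈ R, κ (σ α) = κ α

/-- `x ∈ ℝ^d` is regular if `⟨α,x⟩ ≠ 0` for all roots `α ∈ R`. -/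
def isRegular {d : ℕ} (R : Finset (Ed d)) (x : Ed d) : Prop :=
  ∀ α ∈ R, ⟪α, x⟫ ≠ (0 : ℝ)

/-- Second directional derivative of `u` at `p` in direction `v`. -/
def pd2 {d : ℕ} (u : Ed d × ℝ → ℝ) (p v : Ed d × ℝ) : ℝ :=
  fderiv ℝ (fun q => fderiv ℝ u q v) p v

/-- The Euclidean Laplacian on `ℝ^{d+1} = ℝ^d × ℝ`. -/
def lapE {d : ℕ} (u : Ed d × ℝ → ℝ) (p : Ed d × ℝ) : ℝ :=
  (∑ i : Fin d, pd2 u p (EuclideanSpace.single i 1, 0)) + pd2 u p (0, 1)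

/-- The Dunkl Laplacian `Δ_κ` on `ℝ^{d+1}` (the Dunkl operators act in the `x`-variables). -/
def dunklLap {d : ℕ} (Rp : Finset (Ed d)) (κ : Ed d → ℝ) (u : Ed d × ℝ → ℝ)
    (p : Ed d × ℝ) : ℝ :=
  lapE u p + 2 * ∑ α ∈ Rp, κ α *
    (fderiv ℝ u p (α, 0) / ⟪α, p.1⟫ - (u p - u (reflAt α p.1, p.2)) / ⟪α, p.1⟫ ^ 2)

/-- The open upper half-space `ℝ^{d+1}₊`. -/
def upperHS (d : ℕ) : Set (Ed d × ℝ) := {p | 0 < p.2}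

/-- `u` is `κ`-harmonic on `Ω`: `u` is `C²` on `Ω` and `Δ_κ u = 0` at every point of `Ω`
whose `x`-coordinate is regular. -/
def KHarmonicOn {d : ℕ} (R Rp : Finset (Ed d)) (κ : Ed d → ℝ) (u : Ed d × ℝ → ℝ)
    (Ω : Set (Ed d × ℝ)) : Prop :=
  ContDiffOn ℝ 2 u Ω ∧ ∀ p ∈ Ω, isRegular R p.1 → dunklLap Rp κ u p = 0

/-- The cone `Γ_a(x)` of aperture `a` with vertex `(x,0)`. -/
def cone {d : ℕ} (a : ℝ) (x : Ed d) : Set (Ed d × ℝ) :=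
  {p | 0 < p.2 ∧ dist p.1 x < a * p.2}

/-- The truncated cone `Γ_a^h(x)`. -/
def coneT {d : ℕ} (a h : ℝ) (x : Ed d) : Set (Ed d × ℝ) :=
  {p | 0 < p.2 ∧ p.2 < h ∧ dist p.1 x < a * p.2}

/-- `u` has a finite non-tangential limit at `(x,0)`. -/
def HasNTLimit {d : ℕ} (u : Ed d × ℝ → ℝ) (x : Ed d) : Prop :=
  ∀ a > (0 : ℝ), ∃ L : ℝ, Tendsto u (𝓝[cone a x] (x, (0 : ℝ))) (𝓝 L)

/-- `u` is non-tangentially bounded at `(x,0)`. -/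
def NTBounded {d : ℕ} (u : Ed d × ℝ → ℝ) (x : Ed d) : Prop :=
  ∃ a > (0 : ℝ), ∃ h > (0 : ℝ), ∃ M : ℝ, ∀ p ∈ coneT a h x, |u p| ≤ M

/-- A subset of `ℝ^d` is `G`-invariant. -/
def GInvSet {d : ℕ} (R : Finset (Ed d)) (E : Set (Ed d)) : Prop :=
  ∀ σ ∈ dunklGroup R, σ '' E = E

/-! ### Second derivatives and the Euclidean Laplacian -/

section SecondDerivative

variable {X : Type*} [NormedAddCommGroup X] [NormedSpace ℝ X] {f g : X → ℝ} {p : X}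

lemma contDiffAt_fderiv_apply {n : WithTop ℕ∞} (hf : ContDiffAt ℝ (n + 1) f p) (e : X) :
    ContDiffAt ℝ n (fun q => fderiv ℝ f q e) p :=
  (hf.fderiv_right le_rfl).clm_apply contDiffAt_const

lemma differentiableAt_fderiv_apply (hf : ContDiffAt ℝ 2 f p) (e : X) :
    DifferentiableAt ℝ (fun q => fderiv ℝ f q e) p :=
  (contDiffAt_fderiv_apply (n := 1) hf e).differentiableAt one_ne_zero

lemma eventually_differentiableAt (hf : ContDiffAt ℝ 2 f p) : ∀ᶠ q in 𝓝 p, DifferentiableAt ℝ f q :=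
  (hf.eventually (by simp)).mono fun _ hq => hq.differentiableAt two_ne_zero

lemma fderiv_fderiv_mul (hf : ContDiffAt ℝ 2 f p) (hg : ContDiffAt ℝ 2 g p) (e : X) :
    fderiv ℝ (fun q => fderiv ℝ (fun q => f q * g q) q e) p e =
      f p * fderiv ℝ (fun q => fderiv ℝ g q e) p e + 2 * (fderiv ℝ f p e * fderiv ℝ g p e) +
        g p * fderiv ℝ (fun q => fderiv ℝ f q e) p e := by
  have first : (fun q => fderiv ℝ (fun q => f q * g q) q e) =ᶠ[𝓝 p]
      fun q => f q * fderiv ℝ g q e + g q * fderiv ℝ f q e := by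
    filter_upwards [eventually_differentiableAt hf, eventually_differentiableAt hg] with q hfq hgq
    simp [fderiv_fun_mul hfq hgq]
  have df := hf.differentiableAt two_ne_zero
  have dg := hg.differentiableAt two_ne_zero
  have df' := differentiableAt_fderiv_apply hf e
  have dg' := differentiableAt_fderiv_apply hg e
  rw [first.fderiv_eq, fderiv_fun_add (df.fun_mul dg') (dg.fun_mul df'), fderiv_fun_mul df dg',
    fderiv_fun_mul dg df']
  simp only [_root_.add_apply, _root_.smul_apply, smul_eq_mul]
  ring

/- A positive second derivative would make `p` a local minimum as well, so that `f` would be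
constant on the line near `p`. -/
lemma fderiv_fderiv_nonpos_of_isLocalMax (hf : ContDiffAt ℝ 2 f p) (hmax : IsLocalMax f p)
    (e : X) : fderiv ℝ (fun q => fderiv ℝ f q e) p e ≤ 0 := by
  set c := fderiv ℝ (fun q => fderiv ℝ f q e) p e
  have line (t : ℝ) : HasDerivAt (fun s : ℝ => p + s • e) e t := by
    simpa using ((hasDerivAt_id t).smul_const e).const_add p
  have line_tendsto : Tendsto (fun s : ℝ => p + s • e) (𝓝 0) (𝓝 p) := by
    simpa using (line 0).continuousAt.tendsto
  have deriv_line : deriv (fun s : ℝ => f (p + s • e)) =ᶠ[𝓝 0]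
      fun s => fderiv ℝ f (p + s • e) e := by
    filter_upwards [line_tendsto.eventually (eventually_differentiableAt hf)] with t ht
    exact (ht.hasFDerivAt.comp_hasDerivAt t (line t)).deriv
  have deriv_deriv_line : deriv (deriv fun s : ℝ => f (p + s • e)) 0 = c := by
    have h := (differentiableAt_fderiv_apply hf e).hasFDerivAt
    rw [show p = p + (0 : ℝ) • e by simp] at h
    rw [deriv_line.deriv_eq]
    refine (h.comp_hasDerivAt (0 : ℝ) (line 0)).deriv.trans ?_
    simp [c]
  have hmax_line : IsLocalMax (fun s : ℝ => f (p + s • e)) 0 := by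
    filter_upwards [line_tendsto.eventually hmax] with s hs
    simpa using hs
  by_contra! hc
  have hmin : IsLocalMin (fun s : ℝ => f (p + s • e)) 0 := by
    refine isLocalMin_of_deriv_deriv_pos (deriv_deriv_line ▸ hc) hmax_line.deriv_eq_zero ?_
    exact ContinuousAt.comp (g := f) (by simpa using hf.continuousAt) (line 0).continuousAt
  have hconst : (fun s : ℝ => f (p + s • e)) =ᶠ[𝓝 0] fun _ => f (p + (0 : ℝ) • e) := by
    filter_upwards [hmax_line, hmin] with s h₁ h₂ using le_antisymm h₁ h₂
  rw [← deriv_deriv_line, hconst.deriv.deriv_eq] at hc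
  simp at hc

end SecondDerivative

section Laplacian

variable {d : ℕ} {f g : Ed d × ℝ → ℝ} {p : Ed d × ℝ}

lemma continuousAt_lapE (hf : ContDiffAt ℝ 2 f p) : ContinuousAt (lapE f) p := by
  have continuousAt_pd2 (e : Ed d × ℝ) : ContinuousAt (fun q => pd2 f q e) p :=
    (contDiffAt_fderiv_apply (n := 0) (contDiffAt_fderiv_apply (n := 1) hf e) e).continuousAt
  exact (tendsto_finsetSum _ fun i _ => continuousAt_pd2 _).add (continuousAt_pd2 _)

lemma lapE_add (hf : ContDiffAt ℝ 2 f p) (hg : ContDiffAt ℝ 2 g p) :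
    lapE (fun q => f q + g q) p = lapE f p + lapE g p := by
  have pd2_add (e : Ed d × ℝ) : pd2 (fun q => f q + g q) p e = pd2 f p e + pd2 g p e := by
    have first : (fun q => fderiv ℝ (fun q => f q + g q) q e) =ᶠ[𝓝 p]
        fun q => fderiv ℝ f q e + fderiv ℝ g q e := by
      filter_upwards [eventually_differentiableAt hf, eventually_differentiableAt hg]
        with q hfq hgq
      simp [fderiv_fun_add hfq hgq]
    rw [pd2, first.fderiv_eq, fderiv_fun_add (differentiableAt_fderiv_apply hf e)
      (differentiableAt_fderiv_apply hg e)]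
    rfl
  simp only [lapE, pd2_add, Finset.sum_add_distrib]
  ring

lemma lapE_const_mul (c : ℝ) (f : Ed d × ℝ → ℝ) (p : Ed d × ℝ) :
    lapE (fun q => c * f q) p = c * lapE f p := by
  have fderiv_const_mul_apply (h : Ed d × ℝ → ℝ) (q e : Ed d × ℝ) :
      fderiv ℝ (fun q => c * h q) q e = c * fderiv ℝ h q e :=
    congrArg (fun F => F q e) (fderiv_const_smul_field (𝕜 := ℝ) (f := h) c)
  simp only [lapE, pd2, fderiv_const_mul_apply, mul_add, Finset.mul_sum]

lemma lapE_neg (f : Ed d × ℝ → ℝ) (p : Ed d × ℝ) : lapE (fun q => -f q) p = -lapE f p := by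
  simpa using lapE_const_mul (-1) f p

lemma lapE_sub (hf : ContDiffAt ℝ 2 f p) (hg : ContDiffAt ℝ 2 g p) :
    lapE (fun q => f q - g q) p = lapE f p - lapE g p := by
  simp only [sub_eq_add_neg, lapE_add hf hg.neg, lapE_neg]

lemma lapE_mul (hf : ContDiffAt ℝ 2 f p) (hg : ContDiffAt ℝ 2 g p) :
    lapE (fun q => f q * g q) p = f p * lapE g p +
      2 * ((∑ i : Fin d, fderiv ℝ f p (EuclideanSpace.single i 1, 0) *
        fderiv ℝ g p (EuclideanSpace.single i 1, 0)) + fderiv ℝ f p (0, 1) * fderiv ℝ g p (0, 1)) +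
      g p * lapE f p := by
  simp only [lapE, pd2, fderiv_fderiv_mul hf hg, Finset.sum_add_distrib, ← Finset.mul_sum]
  ring

lemma lapE_comp_add_right (f : Ed d × ℝ → ℝ) (b p : Ed d × ℝ) :
    lapE (fun q => f (q + b)) p = lapE f (p + b) := by
  have pd2_comp (e : Ed d × ℝ) : pd2 (fun q => f (q + b)) p e = pd2 f (p + b) e := by
    simp only [pd2, fderiv_comp_add_right]
    exact congrArg (· e) (fderiv_comp_add_right (𝕜 := ℝ) (f := fun q => fderiv ℝ f q e) b)
  simp only [lapE, pd2_comp]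

lemma lapE_nonpos_of_isLocalMax (hf : ContDiffAt ℝ 2 f p) (hmax : IsLocalMax f p) :
    lapE f p ≤ 0 :=
  add_nonpos (Finset.sum_nonpos fun _ _ => fderiv_fderiv_nonpos_of_isLocalMax hf hmax _)
    (fderiv_fderiv_nonpos_of_isLocalMax hf hmax _)

lemma lapE_const (c : ℝ) : lapE (fun _ : Ed d × ℝ => c) p = 0 := by
  simp [lapE, pd2]

lemma lapE_snd : lapE (fun q : Ed d × ℝ => q.2) p = 0 := by
  simp [lapE, pd2, fderiv_snd]

lemma lapE_snd_sq : lapE (fun q : Ed d × ℝ => q.2 ^ 2) p = 2 := by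
  have h := lapE_mul (d := d) (p := p) contDiffAt_snd contDiffAt_snd
  simpa [lapE_snd, fderiv_snd, sq] using h

end Laplacian

/-! ### Integrals of a smooth kernel against a compactly supported function -/

section ParametricIntegral

universe u v

variable {X G : Type u} {Z : Type v} [NormedAddCommGroup X] [NormedAddCommGroup Z]
  [NormedAddCommGroup G] {f : Z → ℝ} {k : X → Z → G} {U : Set X} {x₀ : X}

open Function (uncurry)

lemma exists_norm_kernel_le [ProperSpace X] (hfc : HasCompactSupport f) (hU : IsOpen U)
    (hk : ContinuousOn (uncurry k) (U ×ˢ Set.univ)) (hx₀ : x₀ ∈ U) :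
    ∃ V ∈ 𝓝 x₀, V ⊆ U ∧ ∃ C, ∀ x ∈ V, ∀ z ∈ tsupport f, ‖k x z‖ ≤ C := by
  obtain ⟨r, hr, hrU⟩ := nhds_basis_closedBall.mem_iff.1 (hU.mem_nhds hx₀)
  obtain ⟨C, hC⟩ := ((isCompact_closedBall x₀ r).prod hfc).exists_bound_of_continuousOn
    (hk.mono (Set.prod_mono hrU (Set.subset_univ _)))
  exact ⟨_, closedBall_mem_nhds x₀ hr, hrU, C, fun x hx z hz => hC (x, z) ⟨hx, hz⟩⟩

variable [NormedSpace ℝ G]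

lemma contDiffOn_fderiv_kernel [NormedSpace ℝ X] [NormedSpace ℝ Z] {n : ℕ} (hU : IsOpen U)
    (hk : ContDiffOn ℝ (n + 1) (uncurry k) (U ×ˢ Set.univ)) :
    ContDiffOn ℝ n (uncurry fun x z => fderiv ℝ (fun x => k x z) x) (U ×ˢ Set.univ) := by
  intro p hp
  have h : ContDiffAt ℝ (n + 1) (uncurry fun (p : X × Z) x => k x p.2) (p, p.1) :=
    (hk.contDiffAt ((hU.prod isOpen_univ).mem_nhds hp)).comp (f := fun q : (X × Z) × X =>
      (q.2, q.1.2)) (p, p.1) (by fun_prop)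
  exact (ContDiffAt.fderiv h contDiffAt_fst le_rfl).contDiffWithinAt

lemma norm_smul_le_of_mem_tsupport {C : ℝ} {g : Z → G} (hg : ∀ z ∈ tsupport f, ‖g z‖ ≤ C)
    (z : Z) : ‖f z • g z‖ ≤ C * ‖f z‖ := by
  by_cases hz : f z = 0
  · simp [hz]
  · rw [norm_smul, mul_comm]
    exact mul_le_mul_of_nonneg_right (hg z (subset_tsupport f hz)) (norm_nonneg _)

variable [MeasurableSpace Z] [BorelSpace Z] {μ : Measure Z}

lemma aestronglyMeasurable_smul_kernel [SecondCountableTopologyEither Z G]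
    (hf : AEStronglyMeasurable f μ) (hk : ContinuousOn (uncurry k) (U ×ˢ Set.univ)) {x : X}
    (hx : x ∈ U) : AEStronglyMeasurable (fun z => f z • k x z) μ := by
  have hkx : Continuous (k x) :=
    hk.comp_continuous (f := fun z => (x, z)) (by fun_prop) fun z => ⟨hx, Set.mem_univ z⟩
  exact hf.smul hkx.aestronglyMeasurable

variable [ProperSpace X]

lemma integrable_smul_kernel [SecondCountableTopologyEither Z G] (hf : Integrable f μ)
    (hfc : HasCompactSupport f) (hU : IsOpen U) (hk : ContinuousOn (uncurry k) (U ×ˢ Set.univ))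
    (hx₀ : x₀ ∈ U) : Integrable (fun z => f z • k x₀ z) μ := by
  obtain ⟨V, hV, -, C, hC⟩ := exists_norm_kernel_le hfc hU hk hx₀
  exact (hf.norm.const_mul C).mono' (aestronglyMeasurable_smul_kernel hf.1 hk hx₀)
    (Eventually.of_forall (norm_smul_le_of_mem_tsupport (hC _ (mem_of_mem_nhds hV))))

lemma continuousOn_integral_smul_kernel [SecondCountableTopologyEither Z G]
    (hf : Integrable f μ) (hfc : HasCompactSupport f) (hU : IsOpen U)
    (hk : ContinuousOn (uncurry k) (U ×ˢ Set.univ)) :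
    ContinuousOn (fun x => ∫ z, f z • k x z ∂μ) U := by
  intro x₀ hx₀
  obtain ⟨V, hV, hVU, C, hC⟩ := exists_norm_kernel_le hfc hU hk hx₀
  refine (continuousAt_of_dominated (bound := fun z => C * ‖f z‖)
    (eventually_of_mem hV fun x hx => aestronglyMeasurable_smul_kernel hf.1 hk (hVU hx))
    (eventually_of_mem hV fun x hx => Eventually.of_forall
      (norm_smul_le_of_mem_tsupport (hC x hx))) (hf.norm.const_mul C)
    (Eventually.of_forall fun z => ContinuousAt.const_smul ?_ _)).continuousWithinAt
  exact ContinuousAt.comp' (g := uncurry k) (f := fun x => (x, z)) (hk.continuousAt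
    ((hU.prod isOpen_univ).mem_nhds ⟨hx₀, Set.mem_univ z⟩)) (by fun_prop)

variable [NormedSpace ℝ X] [NormedSpace ℝ Z] [SecondCountableTopology Z]

lemma hasFDerivAt_integral_smul_kernel (hf : Integrable f μ)
    (hfc : HasCompactSupport f) (hU : IsOpen U)
    (hk : ContDiffOn ℝ 1 (uncurry k) (U ×ˢ Set.univ)) (hx₀ : x₀ ∈ U) :
    HasFDerivAt (fun x => ∫ z, f z • k x z ∂μ)
      (∫ z, f z • fderiv ℝ (fun x => k x z) x₀ ∂μ) x₀ := by
  have hDk : ContinuousOn (uncurry fun x z => fderiv ℝ (fun x => k x z) x) (U ×ˢ Set.univ) :=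
    (contDiffOn_fderiv_kernel (n := 0) hU (by simpa using hk)).continuousOn
  obtain ⟨V, hV, hVU, C, hC⟩ := exists_norm_kernel_le hfc hU hDk hx₀
  refine hasFDerivAt_integral_of_dominated_of_fderiv_le (bound := fun z => C * ‖f z‖)
    (F' := fun x z => f z • fderiv ℝ (fun x => k x z) x) hV
    (eventually_of_mem hV fun x hx =>
      aestronglyMeasurable_smul_kernel hf.1 hk.continuousOn (hVU hx))
    (integrable_smul_kernel hf hfc hU hk.continuousOn hx₀)
    (aestronglyMeasurable_smul_kernel hf.1 hDk hx₀)
    (Eventually.of_forall fun z x hx => norm_smul_le_of_mem_tsupport (hC x hx) z)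
    (hf.norm.const_mul C) (Eventually.of_forall fun z x hx => ?_)
  have hkz : ContDiffAt ℝ 1 (fun x => k x z) x :=
    (hk.contDiffAt ((hU.prod isOpen_univ).mem_nhds ⟨hVU hx, Set.mem_univ z⟩)).comp
      (f := fun x => (x, z)) x (by fun_prop)
  exact (hkz.differentiableAt one_ne_zero).hasFDerivAt.const_smul (f z)

lemma fderiv_integral_smul_kernel_apply (hf : Integrable f μ) (hfc : HasCompactSupport f)
    (hU : IsOpen U) (hk : ContDiffOn ℝ 1 (uncurry k) (U ×ˢ Set.univ)) (hx₀ : x₀ ∈ U) (e : X) :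
    fderiv ℝ (fun x => ∫ z, f z • k x z ∂μ) x₀ e =
      ∫ z, f z • fderiv ℝ (fun x => k x z) x₀ e ∂μ := by
  have hDk : ContinuousOn (uncurry fun x z => fderiv ℝ (fun x => k x z) x) (U ×ˢ Set.univ) :=
    (contDiffOn_fderiv_kernel (n := 0) hU (by simpa using hk)).continuousOn
  rw [(hasFDerivAt_integral_smul_kernel hf hfc hU hk hx₀).fderiv,
    ContinuousLinearMap.integral_apply (integrable_smul_kernel hf hfc hU hDk hx₀)]
  rfl

lemma contDiffOn_integral_smul_kernel (hf : Integrable f μ) (hfc : HasCompactSupport f)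
    (hU : IsOpen U) {n : ℕ} (hk : ContDiffOn ℝ n (uncurry k) (U ×ˢ Set.univ)) :
    ContDiffOn ℝ n (fun x => ∫ z, f z • k x z ∂μ) U := by
  induction n generalizing G with
  | zero =>
    exact contDiffOn_zero.2
      (continuousOn_integral_smul_kernel hf hfc hU (contDiffOn_zero.1 hk))
  | succ n ih =>
    have hderiv (x : X) (hx : x ∈ U) := hasFDerivAt_integral_smul_kernel hf hfc hU
      (hk.of_le (by exact_mod_cast Nat.le_add_left 1 n)) hx
    refine (contDiffOn_succ_iff_fderiv_of_isOpen (n := n) hU).2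
      ⟨fun x hx => (hderiv x hx).differentiableAt.differentiableWithinAt, by simp, ?_⟩
    exact (ih (contDiffOn_fderiv_kernel hU hk)).congr fun x hx => (hderiv x hx).fderiv

end ParametricIntegral

/-! ### Dilations at Lebesgue points -/

section LebesguePoint

variable {V : Type*} [NormedAddCommGroup V] [NormedSpace ℝ V] [FiniteDimensional ℝ V]
  [MeasurableSpace V] [BorelSpace V] {μ : Measure V} [μ.IsAddHaarMeasure]

open scoped Pointwise in
lemma setAverage_closedBall_comp_add_smul (g : V → ℝ) (x : V) {r y : ℝ} (hr : 0 ≤ r)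
    (hy : 0 < y) :
    ⨍ w in closedBall 0 r, g (x + y • w) ∂μ = ⨍ z in closedBall x (y * r), g z ∂μ := by
  have hball : closedBall x (y * r) = (fun z => x + z) '' (y • closedBall (0 : V) r) := by
    simp [smul_closedBall y (0 : V) hr, abs_of_pos hy]
  have hint : ∫ z in closedBall x (y * r), g z ∂μ =
      ∫ z in y • closedBall (0 : V) r, g (x + z) ∂μ := by
    rw [hball, (measurePreserving_add_left μ x).setIntegral_image_emb
      (MeasurableEquiv.addLeft x).measurableEmbedding]
  rw [setAverage_eq, setAverage_eq, hint,
    Measure.setIntegral_comp_smul_of_pos μ (fun z => g (x + z)) _ hy, Measure.real, Measure.real,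
    Measure.addHaar_closedBall_mul μ x hy.le hr, ENNReal.toReal_mul,
    ENNReal.toReal_ofReal (by positivity), mul_inv, smul_smul, mul_comm (y ^ _)⁻¹]

lemma ae_tendsto_setIntegral_closedBall_dilation {f : V → ℝ} (hf : LocallyIntegrable f μ) :
    ∀ᵐ x ∂μ, ∀ r : ℝ,
      Tendsto (fun y : ℝ => ∫ w in closedBall 0 r, ‖f (x + y • w) - f x‖ ∂μ) (𝓝[>] 0) (𝓝 0) := by
  filter_upwards [IsUnifLocDoublingMeasure.ae_tendsto_average_norm_sub μ hf 1] with x hx r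
  rcases le_or_gt r 0 with hr | hr
  · have hzero (y : ℝ) : ∫ w in closedBall 0 r, ‖f (x + y • w) - f x‖ ∂μ = 0 :=
      setIntegral_eq_zero_of_forall_eq_zero fun w hw => by
        simp [norm_le_zero_iff.1 ((mem_closedBall_zero_iff.1 hw).trans hr)]
    simpa only [hzero] using tendsto_const_nhds
  have hradius : Tendsto (fun y : ℝ => y * r) (𝓝[>] 0) (𝓝[>] 0) := by
    refine tendsto_nhdsWithin_iff.2 ⟨?_, ?_⟩
    · simpa using (tendsto_id.mul_const r).mono_left (nhdsWithin_le_nhds (a := (0 : ℝ)))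
    · filter_upwards [self_mem_nhdsWithin] with y hy using mul_pos hy hr
  have haverage := hx (fun _ => x) _ hradius (hradius.eventually_mem self_mem_nhdsWithin |>.mono
    fun y hy => by simpa using le_of_lt hy)
  have hlim : Tendsto (fun y : ℝ => μ.real (closedBall (0 : V) r) *
      ⨍ z in closedBall x (y * r), ‖f z - f x‖ ∂μ) (𝓝[>] 0) (𝓝 0) := by
    simpa only [mul_zero] using haverage.const_mul (μ.real (closedBall (0 : V) r))
  refine hlim.congr' ?_
  filter_upwards [self_mem_nhdsWithin] with y hy
  rw [← setAverage_closedBall_comp_add_smul (fun z => ‖f z - f x‖) x hr.le hy, ← smul_eq_mul]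
  exact measure_smul_setAverage _ measure_closedBall_lt_top.ne

end LebesguePoint

lemma tendsto_integral_mul_of_tendsto_setIntegral_closedBall {V ι : Type*}
    [NormedAddCommGroup V] [ProperSpace V] [MeasurableSpace V] [OpensMeasurableSpace V]
    {μ : Measure V} [IsFiniteMeasureOnCompacts μ] {l : Filter ι} {g : V → ℝ} {F : ι → V → ℝ}
    {B M : ℝ} (hg : Integrable g μ) (hg0 : ∀ w, 0 ≤ g w) (hgB : ∀ w, g w ≤ B)
    (hF : ∀ i, AEStronglyMeasurable (F i) μ) (hF0 : ∀ i w, 0 ≤ F i w) (hFM : ∀ i w, F i w ≤ M)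
    (hlim : ∀ r : ℝ, Tendsto (fun i => ∫ w in closedBall 0 r, F i w ∂μ) l (𝓝 0)) :
    Tendsto (fun i => ∫ w, g w * F i w ∂μ) l (𝓝 0) := by
  have split (i : ι) (r : ℝ) : ∫ w, g w * F i w ∂μ ≤
      B * ∫ w in closedBall 0 r, F i w ∂μ + M * (∫ w, g w ∂μ - ∫ w in closedBall 0 r, g w ∂μ) := by
    have hs : MeasurableSet (closedBall (0 : V) r) := measurableSet_closedBall
    have hgF : Integrable (fun w => g w * F i w) μ := hg.mul_bdd (c := M) (hF i)
      (Eventually.of_forall fun w => by simpa [abs_of_nonneg (hF0 i w)] using hFM i w)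
    have hFr : IntegrableOn (F i) (closedBall 0 r) μ :=
      Measure.integrableOn_of_bounded (M := M) (isCompact_closedBall 0 r).measure_ne_top (hF i)
        (Eventually.of_forall fun w => by simpa [abs_of_nonneg (hF0 i w)] using hFM i w)
    rw [← integral_add_compl hs hgF, ← integral_add_compl hs hg, add_sub_cancel_left,
      ← integral_const_mul, ← integral_const_mul]
    refine add_le_add (integral_mono hgF.integrableOn (hFr.const_mul B) fun w => ?_)
      (integral_mono hgF.integrableOn (hg.integrableOn.const_mul M) fun w => ?_)
    · exact mul_le_mul_of_nonneg_right (hgB w) (hF0 i w)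
    · exact (mul_le_mul_of_nonneg_left (hFM i w) (hg0 w)).trans_eq (mul_comm _ _)
  have htail : Tendsto (fun r : ℝ => M * (∫ w, g w ∂μ - ∫ w in closedBall 0 r, g w ∂μ))
      atTop (𝓝 0) := by
    simpa using (((aecover_closedBall tendsto_id).integral_tendsto_of_countably_generated
      hg).const_sub (∫ w, g w ∂μ)).const_mul M
  refine tendsto_order.2 ⟨fun ε hε => Eventually.of_forall fun i => hε.trans_le
    (integral_nonneg fun w => mul_nonneg (hg0 w) (hF0 i w)), fun ε hε => ?_⟩
  obtain ⟨r, hr⟩ := (htail.eventually (gt_mem_nhds hε)).exists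
  have hbound := ((hlim r).const_mul B).add_const
    (M * (∫ w, g w ∂μ - ∫ w in closedBall 0 r, g w ∂μ))
  rw [mul_zero, zero_add] at hbound
  filter_upwards [hbound.eventually (gt_mem_nhds hr)] with i hi using (split i r).trans_lt hi

/-! ### The Poisson kernel of the half-space -/

/-- The Poisson kernel `c_d y (‖t‖² + y²)^{-(d+1)/2}` of the upper half-space as a function of the
point `(t, y)`, with `c_d` chosen so that it has integral `1` over each horizontal slice. -/
def poissonKernelHS {d : ℕ} (p : Ed d × ℝ) : ℝ :=
  (∫ w : Ed d, (1 + ‖w‖ ^ 2) ^ (-((d : ℝ) + 1) / 2))⁻¹ *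
    (p.2 * (‖p.1‖ ^ 2 + p.2 ^ 2) ^ (-((d : ℝ) + 1) / 2))

/-- The Poisson integral of `φ : ℝ^d → ℝ`, a function on the upper half-space. -/
def poissonIntegral {d : ℕ} (φ : Ed d → ℝ) (p : Ed d × ℝ) : ℝ :=
  ∫ z, φ z * poissonKernelHS (p - (z, 0))

section PoissonKernel

variable {d : ℕ}

lemma integrable_one_add_norm_sq_rpow :
    Integrable fun w : Ed d => (1 + ‖w‖ ^ 2) ^ (-((d : ℝ) + 1) / 2) :=
  integrable_rpow_neg_one_add_norm_sq (μ := volume) (r := (d : ℝ) + 1) (by simp)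

lemma integral_one_add_norm_sq_rpow_pos :
    0 < ∫ w : Ed d, (1 + ‖w‖ ^ 2) ^ (-((d : ℝ) + 1) / 2) := by
  have hpos (w : Ed d) : 0 < (1 + ‖w‖ ^ 2) ^ (-((d : ℝ) + 1) / 2) := by positivity
  rw [integral_pos_iff_support_of_nonneg (fun w => (hpos w).le) integrable_one_add_norm_sq_rpow,
    show Function.support (fun w : Ed d => (1 + ‖w‖ ^ 2) ^ (-((d : ℝ) + 1) / 2)) = Set.univ from
      Set.eq_univ_of_forall fun w => (hpos w).ne']
  exact NeZero.pos _

lemma poissonKernelHS_pos {p : Ed d × ℝ} (hp : 0 < p.2) : 0 < poissonKernelHS p := by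
  have := integral_one_add_norm_sq_rpow_pos (d := d)
  unfold poissonKernelHS
  positivity

lemma poissonKernelHS_neg (w : Ed d) (y : ℝ) :
    poissonKernelHS (-w, y) = poissonKernelHS (w, y) := by
  simp only [poissonKernelHS, norm_neg]

lemma contDiffAt_norm_sq_add_sq_rpow {n : WithTop ℕ∞} {p : Ed d × ℝ} (hp : 0 < p.2) (r : ℝ) :
    ContDiffAt ℝ n (fun q : Ed d × ℝ => (‖q.1‖ ^ 2 + q.2 ^ 2) ^ r) p :=
  ((contDiffAt_fst.norm_sq ℝ).add (contDiffAt_snd.pow 2)).rpow_const_of_ne (by positivity)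

lemma fderiv_norm_sq_add_sq_rpow {p : Ed d × ℝ} (hp : 0 < p.2) (r : ℝ) (e : Ed d × ℝ) :
    fderiv ℝ (fun q : Ed d × ℝ => (‖q.1‖ ^ 2 + q.2 ^ 2) ^ r) p e =
      2 * r * ((‖p.1‖ ^ 2 + p.2 ^ 2) ^ (r - 1) * (⟪p.1, e.1⟫ + p.2 * e.2)) := by
  have hρ : HasFDerivAt (fun q : Ed d × ℝ => ‖q.1‖ ^ 2 + q.2 ^ 2) _ p :=
    (hasFDerivAt_fst.norm_sq).add (hasFDerivAt_snd.pow 2)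
  rw [(hρ.rpow_const (p := r) (Or.inl (by positivity))).fderiv]
  simp only [Nat.add_one_sub_one, pow_one, nsmul_eq_mul, Nat.cast_ofNat, smul_add,
    _root_.add_apply, _root_.smul_apply, ContinuousLinearMap.comp_apply,
    ContinuousLinearMap.coe_fst', ContinuousLinearMap.coe_snd', coe_innerSL_apply, smul_eq_mul]
  ring

lemma pd2_norm_sq_add_sq_rpow {p : Ed d × ℝ} (hp : 0 < p.2) (r : ℝ) (e : Ed d × ℝ) :
    pd2 (fun q => (‖q.1‖ ^ 2 + q.2 ^ 2) ^ r) p e =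
      4 * r * (r - 1) * (‖p.1‖ ^ 2 + p.2 ^ 2) ^ (r - 1 - 1) * (⟪p.1, e.1⟫ + p.2 * e.2) ^ 2 +
        2 * r * (‖p.1‖ ^ 2 + p.2 ^ 2) ^ (r - 1) * (‖e.1‖ ^ 2 + e.2 ^ 2) := by
  have first : (fun q : Ed d × ℝ => fderiv ℝ (fun q => (‖q.1‖ ^ 2 + q.2 ^ 2) ^ r) q e) =ᶠ[𝓝 p]
      fun q => 2 * r * ((‖q.1‖ ^ 2 + q.2 ^ 2) ^ (r - 1) * (⟪q.1, e.1⟫ + q.2 * e.2)) := by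
    filter_upwards [continuousAt_snd.eventually (lt_mem_nhds hp)] with q hq
    exact fderiv_norm_sq_add_sq_rpow hq r e
  have hlin : HasFDerivAt (fun q : Ed d × ℝ => ⟪q.1, e.1⟫ + q.2 * e.2) _ p :=
    (hasFDerivAt_fst.inner ℝ (hasFDerivAt_const e.1 p)).add (hasFDerivAt_snd.mul_const e.2)
  have hpow : DifferentiableAt ℝ (fun q : Ed d × ℝ => (‖q.1‖ ^ 2 + q.2 ^ 2) ^ (r - 1)) p :=
    (contDiffAt_norm_sq_add_sq_rpow (n := 1) hp _).differentiableAt one_ne_zero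
  rw [pd2, first.fderiv_eq, fderiv_const_mul (hpow.fun_mul hlin.differentiableAt),
    fderiv_fun_mul hpow hlin.differentiableAt, hlin.fderiv]
  simp only [smul_add, _root_.add_apply, _root_.smul_apply, ContinuousLinearMap.comp_apply,
    ContinuousLinearMap.prod_apply, ContinuousLinearMap.coe_fst', ContinuousLinearMap.coe_snd',
    _root_.zero_apply, fderivInnerCLM_apply, inner_zero_right, real_inner_self_eq_norm_sq,
    zero_add, smul_eq_mul, fderiv_norm_sq_add_sq_rpow hp]
  ring

lemma lapE_norm_sq_add_sq_rpow {p : Ed d × ℝ} (hp : 0 < p.2) (r : ℝ) :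
    lapE (fun q => (‖q.1‖ ^ 2 + q.2 ^ 2) ^ r) p =
      2 * r * (d - 1 + 2 * r) * (‖p.1‖ ^ 2 + p.2 ^ 2) ^ (r - 1) := by
  have hρ : 0 < ‖p.1‖ ^ 2 + p.2 ^ 2 := by positivity
  have hpow : (‖p.1‖ ^ 2 + p.2 ^ 2) ^ (r - 1) =
      (‖p.1‖ ^ 2 + p.2 ^ 2) ^ (r - 1 - 1) * (‖p.1‖ ^ 2 + p.2 ^ 2) := by
    rw [← Real.rpow_add_one hρ.ne', sub_add_cancel]
  have hnorm : ∑ i, p.1 i ^ 2 = ‖p.1‖ ^ 2 := (EuclideanSpace.real_norm_sq_eq p.1).symm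
  simp only [lapE, pd2_norm_sq_add_sq_rpow hp, hpow, EuclideanSpace.inner_single_right,
    conj_trivial]
  simp only [one_mul, mul_zero, add_zero, PiLp.norm_single, norm_one, one_pow, ne_eq,
    OfNat.ofNat_ne_zero, not_false_eq_true, zero_pow, mul_one, Finset.sum_add_distrib,
    ← Finset.mul_sum, hnorm, Finset.sum_const, Finset.card_univ, Fintype.card_fin, nsmul_eq_mul,
    inner_zero_right, zero_add, norm_zero]
  ring

lemma contDiffAt_poissonKernelHS {n : WithTop ℕ∞} {p : Ed d × ℝ} (hp : 0 < p.2) :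
    ContDiffAt ℝ n poissonKernelHS p :=
  contDiffAt_const.mul (contDiffAt_snd.mul
    (contDiffAt_norm_sq_add_sq_rpow hp _))

lemma continuous_poissonKernelHS_one : Continuous fun w : Ed d => poissonKernelHS (w, 1) :=
  continuous_iff_continuousAt.2 fun w =>
    (contDiffAt_poissonKernelHS (n := 0) (p := (w, 1)) one_pos).continuousAt.comp
      (f := fun w : Ed d => (w, (1 : ℝ))) (by fun_prop)

lemma lapE_poissonKernelHS {p : Ed d × ℝ} (hp : 0 < p.2) : lapE poissonKernelHS p = 0 := by
  have hmul := lapE_mul (contDiffAt_snd (p := p))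
    (contDiffAt_norm_sq_add_sq_rpow hp (-((d : ℝ) + 1) / 2))
  rw [lapE_snd, lapE_norm_sq_add_sq_rpow hp] at hmul
  simp only [fderiv_snd, ContinuousLinearMap.coe_snd', fderiv_norm_sq_add_sq_rpow hp, mul_zero,
    add_zero, zero_mul, Finset.sum_const_zero, inner_zero_right, mul_one, zero_add, one_mul] at hmul
  unfold poissonKernelHS
  rw [lapE_const_mul, hmul]
  ring

lemma poissonKernelHS_smul (w : Ed d) (s : ℝ) {y : ℝ} (hy : 0 < y) :
    poissonKernelHS (y • (w, s)) = (y ^ d)⁻¹ * poissonKernelHS (w, s) := by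
  have hsq : ‖y • w‖ ^ 2 + (y * s) ^ 2 = y ^ 2 * (‖w‖ ^ 2 + s ^ 2) := by
    rw [norm_smul, Real.norm_eq_abs, mul_pow, sq_abs]; ring
  have hpow : (y ^ 2) ^ (-((d : ℝ) + 1) / 2) = (y ^ d)⁻¹ * y⁻¹ := by
    rw [← Real.rpow_natCast y 2, ← Real.rpow_mul hy.le,
      show ((2 : ℕ) : ℝ) * (-((d : ℝ) + 1) / 2) = -((d + 1 : ℕ) : ℝ) by push_cast; ring,
      Real.rpow_neg hy.le, Real.rpow_natCast, pow_succ, mul_inv]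
  simp only [poissonKernelHS, Prod.smul_mk, smul_eq_mul, hsq]
  rw [Real.mul_rpow (by positivity) (by positivity), hpow]
  field_simp

lemma poissonKernelHS_one (w : Ed d) :
    poissonKernelHS (w, 1) = (∫ w : Ed d, (1 + ‖w‖ ^ 2) ^ (-((d : ℝ) + 1) / 2))⁻¹ *
      (1 + ‖w‖ ^ 2) ^ (-((d : ℝ) + 1) / 2) := by
  simp only [poissonKernelHS, one_pow, one_mul, add_comm (‖w‖ ^ 2)]

lemma poissonKernelHS_one_le (w : Ed d) :
    poissonKernelHS (w, 1) ≤ (∫ w : Ed d, (1 + ‖w‖ ^ 2) ^ (-((d : ℝ) + 1) / 2))⁻¹ := by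
  rw [poissonKernelHS_one]
  refine mul_le_of_le_one_right (inv_nonneg.2 integral_one_add_norm_sq_rpow_pos.le)
    (Real.rpow_le_one_of_one_le_of_nonpos (by nlinarith [sq_nonneg ‖w‖]) ?_)
  linarith [(Nat.cast_nonneg d : (0 : ℝ) ≤ d)]

/- Harnack's inequality for the Poisson kernel: `1 + ‖w‖² ≤ (2 + 2 a²) (1 + ‖s - w‖²)`. -/
lemma poissonKernelHS_sub_le {a : ℝ} {s : Ed d} (hs : ‖s‖ ≤ a) (w : Ed d) :
    poissonKernelHS (s - w, 1) ≤
      (2 + 2 * a ^ 2) ^ (((d : ℝ) + 1) / 2) * poissonKernelHS (w, 1) := by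
  have hw : ‖w‖ ≤ a + ‖s - w‖ := by
    simpa [norm_sub_rev] using (norm_le_norm_add_norm_sub' w s).trans (add_le_add_left hs _)
  have hquot : (2 + 2 * a ^ 2)⁻¹ * (1 + ‖w‖ ^ 2) ≤ 1 + ‖s - w‖ ^ 2 := by
    rw [inv_mul_le_iff₀ (by positivity)]
    nlinarith [norm_nonneg w, sq_nonneg (a - ‖s - w‖), sq_nonneg (a * ‖s - w‖)]
  have hpow := Real.rpow_le_rpow_of_nonpos (by positivity) hquot
    (show -((d : ℝ) + 1) / 2 ≤ 0 by linarith [(Nat.cast_nonneg d : (0 : ℝ) ≤ d)])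
  rw [Real.mul_rpow (by positivity) (by positivity), Real.inv_rpow (by positivity), neg_div,
    Real.rpow_neg (x := 2 + 2 * a ^ 2) (by positivity), inv_inv, ← neg_div] at hpow
  rw [poissonKernelHS_one, poissonKernelHS_one, mul_left_comm]
  exact mul_le_mul_of_nonneg_left hpow (inv_nonneg.2 integral_one_add_norm_sq_rpow_pos.le)

lemma integrable_poissonKernelHS_one : Integrable fun w : Ed d => poissonKernelHS (w, 1) := by
  simpa only [poissonKernelHS_one] using integrable_one_add_norm_sq_rpow.const_mul _

lemma integral_poissonKernelHS_one : ∫ w : Ed d, poissonKernelHS (w, 1) = 1 := by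
  simp only [poissonKernelHS_one, integral_const_mul]
  exact inv_mul_cancel₀ integral_one_add_norm_sq_rpow_pos.ne'

lemma integral_poissonKernelHS_sub (s : Ed d) : ∫ w : Ed d, poissonKernelHS (s - w, 1) = 1 :=
  (integral_sub_left_eq_self (fun w => poissonKernelHS (w, 1)) volume s).trans
    integral_poissonKernelHS_one

end PoissonKernel

/-! ### Poisson integrals -/

section PoissonIntegral

variable {d : ℕ} {φ : Ed d → ℝ} {M : ℝ}

lemma poissonIntegral_add_smul (φ : Ed d → ℝ) (x s : Ed d) {y : ℝ} (hy : 0 < y) :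
    poissonIntegral φ (x + y • s, y) = ∫ w, φ (x + y • w) * poissonKernelHS (s - w, 1) := by
  have hscale := Measure.integral_comp_smul (volume : Measure (Ed d))
    (fun z => φ (x + z) * poissonKernelHS (y • s - z, y)) y
  rw [finrank_euclideanSpace_fin, abs_of_pos (by positivity), smul_eq_mul,
    eq_inv_mul_iff_mul_eq₀ (by positivity), ← integral_const_mul] at hscale
  rw [poissonIntegral, ← integral_add_left_eq_self _ x]
  refine Eq.trans (integral_congr_ae (Eventually.of_forall fun z => ?_)) (hscale.symm.trans
    (integral_congr_ae (Eventually.of_forall fun w => ?_)))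
  · simp only [Prod.mk_sub_mk, add_sub_add_left_eq_sub, sub_zero]
  · have hK := poissonKernelHS_smul (s - w) 1 hy
    simp only [Prod.smul_mk, smul_eq_mul, mul_one, smul_sub] at hK
    simp only [hK]
    field_simp

lemma poissonIntegral_eq_integral_dilation (φ : Ed d → ℝ) {p : Ed d × ℝ} (hp : 0 < p.2) :
    poissonIntegral φ p = ∫ w, φ (p.1 + p.2 • w) * poissonKernelHS (w, 1) := by
  simpa [poissonKernelHS_neg] using poissonIntegral_add_smul φ p.1 0 hp

lemma poissonIntegral_neg (φ : Ed d → ℝ) (p : Ed d × ℝ) :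
    poissonIntegral (fun z => -φ z) p = -poissonIntegral φ p := by
  simp only [poissonIntegral, neg_mul, integral_neg]

lemma abs_poissonIntegral_le (hM : ∀ z, |φ z| ≤ M) {p : Ed d × ℝ} (hp : 0 < p.2) :
    |poissonIntegral φ p| ≤ M := by
  have hint : M = ∫ w : Ed d, M * poissonKernelHS (w, 1) := by
    rw [integral_const_mul, integral_poissonKernelHS_one, mul_one]
  rw [poissonIntegral_eq_integral_dilation φ hp, ← Real.norm_eq_abs, hint]
  refine norm_integral_le_of_norm_le (integrable_poissonKernelHS_one.const_mul M)
    (Eventually.of_forall fun w => ?_)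
  rw [norm_mul, Real.norm_of_nonneg (poissonKernelHS_pos one_pos).le]
  exact mul_le_mul_of_nonneg_right (hM _) (poissonKernelHS_pos one_pos).le

lemma integrable_dilation_mul_poissonKernelHS (hφ : Measurable φ) (hM : ∀ z, |φ z| ≤ M)
    (x s : Ed d) (y : ℝ) :
    Integrable fun w => φ (x + y • w) * poissonKernelHS (s - w, 1) :=
  (integrable_poissonKernelHS_one.comp_sub_left s).bdd_mul
    (hφ.comp (by fun_prop)).aestronglyMeasurable (Eventually.of_forall fun _ => hM _)

lemma tendsto_poissonIntegral_of_continuousAt (hφ : Measurable φ) (hM : ∀ z, |φ z| ≤ M)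
    {x : Ed d} (hx : ContinuousAt φ x) :
    Tendsto (poissonIntegral φ) (𝓝[{p | 0 < p.2}] (x, 0)) (𝓝 (φ x)) := by
  have hlim : Tendsto (fun p : Ed d × ℝ => ∫ w, φ (p.1 + p.2 • w) * poissonKernelHS (w, 1))
      (𝓝[{p | 0 < p.2}] (x, 0)) (𝓝 (∫ w : Ed d, φ x * poissonKernelHS (w, 1))) := by
    refine tendsto_integral_filter_of_dominated_convergence
      (fun w => M * poissonKernelHS (w, 1)) (Eventually.of_forall fun p => ?_)
      (Eventually.of_forall fun p => Eventually.of_forall fun w => ?_)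
      (integrable_poissonKernelHS_one.const_mul M) (Eventually.of_forall fun w => ?_)
    · exact ((hφ.comp (by fun_prop)).mul
        continuous_poissonKernelHS_one.measurable).aestronglyMeasurable
    · rw [norm_mul, Real.norm_of_nonneg (poissonKernelHS_pos one_pos).le]
      exact mul_le_mul_of_nonneg_right (hM _) (poissonKernelHS_pos one_pos).le
    · have hline : Tendsto (fun p : Ed d × ℝ => p.1 + p.2 • w) (𝓝 (x, 0)) (𝓝 x) :=
        Continuous.tendsto' (by fun_prop) _ _ (by simp)
      exact ((hx.tendsto.comp hline).mul_const _).mono_left nhdsWithin_le_nhds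
  rw [integral_const_mul, integral_poissonKernelHS_one, mul_one] at hlim
  refine hlim.congr' ?_
  filter_upwards [self_mem_nhdsWithin] with p hp
  exact (poissonIntegral_eq_integral_dilation φ hp).symm

lemma poissonIntegral_indicator_le_of_disjoint_ball {S : Set (Ed d)} (hS : MeasurableSet S)
    {a : ℝ} {p : Ed d × ℝ} (hp : 0 < p.2) (hdisj : Disjoint (ball p.1 (a * p.2)) S) :
    poissonIntegral (S.indicator 1) p ≤ 1 - ∫ w in ball (0 : Ed d) a, poissonKernelHS (w, 1) := by
  have hball : MeasurableSet (ball (0 : Ed d) a) := measurableSet_ball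
  have hK := integrable_poissonKernelHS_one (d := d)
  have htotal := integral_add_compl hball hK
  rw [integral_poissonKernelHS_one] at htotal
  rw [poissonIntegral_eq_integral_dilation _ hp, ← eq_sub_of_add_eq' htotal,
    ← integral_indicator hball.compl]
  have hint : Integrable fun w =>
      S.indicator (1 : Ed d → ℝ) (p.1 + p.2 • w) * poissonKernelHS (w, 1) := by
    simpa [poissonKernelHS_neg] using integrable_dilation_mul_poissonKernelHS
      (measurable_one.indicator hS) (M := 1) (fun z => by
        by_cases hz : z ∈ S <;> simp [hz]) p.1 0 p.2
  refine integral_mono hint (hK.indicator hball.compl) fun w => ?_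
  by_cases hw : w ∈ ball (0 : Ed d) a
  · have hmem : p.1 + p.2 • w ∈ ball p.1 (a * p.2) := by
      rw [mem_ball_zero_iff] at hw
      rw [mem_ball_iff_norm, add_sub_cancel_left, norm_smul, Real.norm_of_nonneg hp.le, mul_comm]
      gcongr
    simp [hw, Set.disjoint_left.1 hdisj hmem]
  · have hKw := (poissonKernelHS_pos (p := (w, 1)) one_pos).le
    by_cases hmem : p.1 + p.2 • w ∈ S <;> simp [hw, hmem, hKw]

lemma setIntegral_ball_poissonKernelHS_one_pos {a : ℝ} (ha : 0 < a) :
    0 < ∫ w in ball (0 : Ed d) a, poissonKernelHS (w, 1) := by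
  rw [setIntegral_pos_iff_support_of_nonneg_ae
    (Eventually.of_forall fun w => (poissonKernelHS_pos one_pos).le)
    integrable_poissonKernelHS_one.integrableOn]
  have hsupp : Function.support (fun w : Ed d => poissonKernelHS (w, 1)) = Set.univ :=
    Set.eq_univ_of_forall fun w => (poissonKernelHS_pos one_pos).ne'
  simpa only [hsupp, Set.univ_inter] using measure_ball_pos _ _ ha

end PoissonIntegral

section PoissonIntegralHarmonic

variable {d : ℕ} {φ : Ed d → ℝ} {M : ℝ}

lemma contDiffOn_uncurry_poissonKernelHS {n : WithTop ℕ∞} :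
    ContDiffOn ℝ n (Function.uncurry fun (p : Ed d × ℝ) (z : Ed d) => poissonKernelHS (p - (z, 0)))
      ({p | 0 < p.2} ×ˢ Set.univ) := by
  intro q hq
  have hpos : 0 < (q.1 - (q.2, (0 : ℝ))).2 := by simpa using hq.1
  exact ((contDiffAt_poissonKernelHS hpos).comp (f := fun q : (Ed d × ℝ) × Ed d =>
    q.1 - (q.2, (0 : ℝ))) q (by fun_prop)).contDiffWithinAt

lemma isOpen_setOf_snd_pos : IsOpen {p : Ed d × ℝ | 0 < p.2} :=
  isOpen_lt continuous_const continuous_snd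

lemma contDiffOn_poissonIntegral (hφ : Integrable φ) (hφc : HasCompactSupport φ) (n : ℕ) :
    ContDiffOn ℝ n (poissonIntegral φ) {p | 0 < p.2} :=
  contDiffOn_integral_smul_kernel hφ hφc isOpen_setOf_snd_pos contDiffOn_uncurry_poissonKernelHS

lemma pd2_poissonIntegral (hφ : Integrable φ) (hφc : HasCompactSupport φ) {p : Ed d × ℝ}
    (hp : 0 < p.2) (e : Ed d × ℝ) :
    Integrable (fun z => φ z * pd2 (fun q => poissonKernelHS (q - (z, 0))) p e) ∧
      pd2 (poissonIntegral φ) p e =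
        ∫ z, φ z * pd2 (fun q => poissonKernelHS (q - (z, 0))) p e := by
  have hU := isOpen_setOf_snd_pos (d := d)
  have hDK : ContDiffOn ℝ 1 (Function.uncurry fun (q : Ed d × ℝ) (z : Ed d) =>
      fderiv ℝ (fun q => poissonKernelHS (q - (z, 0))) q e) ({p | 0 < p.2} ×ˢ Set.univ) :=
    (contDiffOn_fderiv_kernel (n := 1) hU contDiffOn_uncurry_poissonKernelHS).clm_apply
      contDiffOn_const
  have hDDK : ContinuousOn (Function.uncurry fun (q : Ed d × ℝ) (z : Ed d) =>
      pd2 (fun q => poissonKernelHS (q - (z, 0))) q e) ({p | 0 < p.2} ×ˢ Set.univ) :=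
    (contDiffOn_fderiv_kernel (n := 0) hU (by simpa using hDK)).continuousOn.clm_apply
      continuousOn_const
  refine ⟨integrable_smul_kernel hφ hφc hU hDDK hp, ?_⟩
  have hfirst : (fun q => fderiv ℝ (poissonIntegral φ) q e) =ᶠ[𝓝 p]
      fun q => ∫ z, φ z * fderiv ℝ (fun q => poissonKernelHS (q - (z, 0))) q e := by
    filter_upwards [hU.mem_nhds hp] with q hq
    exact fderiv_integral_smul_kernel_apply hφ hφc hU contDiffOn_uncurry_poissonKernelHS hq e
  rw [pd2, hfirst.fderiv_eq]
  exact fderiv_integral_smul_kernel_apply hφ hφc hU hDK hp e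

lemma lapE_poissonIntegral (hφ : Integrable φ) (hφc : HasCompactSupport φ) {p : Ed d × ℝ}
    (hp : 0 < p.2) : lapE (poissonIntegral φ) p = 0 := by
  have hpd2 := pd2_poissonIntegral hφ hφc hp
  have hlap : lapE (poissonIntegral φ) p =
      ∫ z, φ z * lapE (fun q => poissonKernelHS (q - (z, 0))) p := by
    simp only [lapE, mul_add, Finset.mul_sum]
    rw [integral_add (integrable_finsetSum _ fun i _ => (hpd2 _).1) (hpd2 _).1,
      integral_finsetSum _ fun i _ => (hpd2 _).1]
    simp only [(hpd2 _).2]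
  have hkernel (z : Ed d) : lapE (fun q => poissonKernelHS (q - (z, 0))) p = 0 := by
    simp only [sub_eq_add_neg, lapE_comp_add_right]
    exact lapE_poissonKernelHS (by simpa using hp)
  simp only [hlap, hkernel, mul_zero, integral_zero]

lemma abs_poissonIntegral_sub_le (hφ : Measurable φ) (hM : ∀ z, |φ z| ≤ M) {a : ℝ} {x s : Ed d}
    (hs : ‖s‖ ≤ a) {y : ℝ} (hy : 0 < y) :
    |poissonIntegral φ (x + y • s, y) - φ x| ≤ (2 + 2 * a ^ 2) ^ (((d : ℝ) + 1) / 2) *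
      ∫ w, poissonKernelHS (w, 1) * ‖φ (x + y • w) - φ x‖ := by
  have hφx : ∫ w, φ x * poissonKernelHS (s - w, 1) = φ x := by
    rw [integral_const_mul, integral_poissonKernelHS_sub, mul_one]
  have hdiff : poissonIntegral φ (x + y • s, y) - φ x =
      ∫ w, (φ (x + y • w) - φ x) * poissonKernelHS (s - w, 1) := by
    simp only [sub_mul]
    rw [integral_sub (integrable_dilation_mul_poissonKernelHS hφ hM x s y)
      ((integrable_poissonKernelHS_one.comp_sub_left s).const_mul _), hφx,
      poissonIntegral_add_smul φ x s hy]
  have hint : Integrable fun w => poissonKernelHS (w, 1) * ‖φ (x + y • w) - φ x‖ := by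
    refine integrable_poissonKernelHS_one.mul_bdd (c := M + M) ?_
      (Eventually.of_forall fun w => ?_)
    · exact ((hφ.comp (by fun_prop)).sub_const _).norm.aestronglyMeasurable
    · rw [norm_norm]
      exact (norm_sub_le _ _).trans (add_le_add (hM _) (hM _))
  rw [hdiff, ← integral_const_mul, ← Real.norm_eq_abs]
  refine norm_integral_le_of_norm_le (hint.const_mul _) (Eventually.of_forall fun w => ?_)
  rw [norm_mul, Real.norm_of_nonneg (poissonKernelHS_pos (p := (s - w, 1)) one_pos).le, mul_comm,
    ← mul_assoc]
  exact mul_le_mul_of_nonneg_right (poissonKernelHS_sub_le hs w) (norm_nonneg _)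

theorem ae_tendsto_poissonIntegral (hφ : Measurable φ) (hM : ∀ z, |φ z| ≤ M) (a : ℝ) :
    ∀ᵐ x : Ed d, Tendsto (poissonIntegral φ) (𝓝[cone a x] (x, 0)) (𝓝 (φ x)) := by
  have hloc : LocallyIntegrable φ volume :=
    (locallyIntegrable_const M).mono hφ.aestronglyMeasurable
      (Eventually.of_forall fun z => (hM z).trans (le_abs_self M))
  filter_upwards [ae_tendsto_setIntegral_closedBall_dilation hloc] with x hx
  have hradial : Tendsto (fun y : ℝ => ∫ w, poissonKernelHS (w, 1) * ‖φ (x + y • w) - φ x‖)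
      (𝓝[>] 0) (𝓝 0) :=
    tendsto_integral_mul_of_tendsto_setIntegral_closedBall integrable_poissonKernelHS_one
      (fun w => (poissonKernelHS_pos one_pos).le) poissonKernelHS_one_le
      (fun y => ((hφ.comp (by fun_prop)).sub_const _).norm.aestronglyMeasurable)
      (fun y w => norm_nonneg _)
      (fun y w => (norm_sub_le _ _).trans (add_le_add (hM _) (hM _))) hx
  have hsnd : Tendsto Prod.snd (𝓝[cone a x] (x, 0)) (𝓝[>] (0 : ℝ)) :=
    tendsto_nhdsWithin_iff.2 ⟨continuous_snd.continuousAt.mono_left nhdsWithin_le_nhds,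
      eventually_nhdsWithin_of_forall fun p hp => hp.1⟩
  have hbound := (hradial.comp hsnd).const_mul ((2 + 2 * a ^ 2) ^ (((d : ℝ) + 1) / 2))
  rw [mul_zero] at hbound
  refine tendsto_iff_norm_sub_tendsto_zero.2
    (squeeze_zero' (Eventually.of_forall fun _ => norm_nonneg _) ?_ hbound)
  filter_upwards [self_mem_nhdsWithin] with p ⟨hp, hpx⟩
  have hs : ‖p.2⁻¹ • (p.1 - x)‖ ≤ a := by
    rw [norm_smul, norm_inv, Real.norm_of_nonneg hp.le, ← dist_eq_norm, inv_mul_le_iff₀ hp,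
      mul_comm]
    exact hpx.le
  have hle := abs_poissonIntegral_sub_le hφ hM (x := x) hs hp
  rwa [smul_inv_smul₀ hp.ne', add_sub_cancel] at hle

end PoissonIntegralHarmonic

/-! ### Maximum principle -/

lemma nonpos_of_forall_not_isLocalMax {X : Type*} [TopologicalSpace X] {Ω : Set X} {f : X → ℝ}
    (hΩ : IsOpen Ω) (hΩc : IsCompact (closure Ω)) (hf : ContinuousOn f Ω)
    (hmax : ∀ p ∈ Ω, ¬IsLocalMax f p)
    (hbd : ∀ q ∈ frontier Ω, ∀ η > 0, ∀ᶠ p in 𝓝[Ω] q, f p ≤ η) {p : X} (hp : p ∈ Ω) :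
    f p ≤ 0 := by
  by_contra! hpos
  set S : Set X := {q ∈ Ω | f p ≤ f q}
  have hSclosed : IsClosed S := by
    refine isClosed_of_closure_subset fun q hq => ?_
    have hfreq : ∃ᶠ x in 𝓝 q, x ∈ S := mem_closure_iff_frequently.1 hq
    have hqΩ : q ∈ Ω := by
      by_contra hqΩ
      have hlow := hbd q ⟨closure_mono (Set.sep_subset _ _) hq, hΩ.interior_eq.symm ▸ hqΩ⟩
        (f p / 2) (half_pos hpos)
      obtain ⟨x, hx, hxlow⟩ := (hfreq.and_eventually (eventually_nhdsWithin_iff.1 hlow)).exists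
      linarith [hxlow hx.1, hx.2]
    exact ⟨hqΩ, ge_of_tendsto_of_frequently (hf.continuousAt (hΩ.mem_nhds hqΩ)).tendsto
      (hfreq.mono fun x hx => hx.2)⟩
  have hSc : IsCompact S :=
    hΩc.of_isClosed_subset hSclosed ((Set.sep_subset _ _).trans subset_closure)
  obtain ⟨q, hqS, hq⟩ := hSc.exists_isMaxOn ⟨p, hp, le_rfl⟩ (hf.mono (Set.sep_subset _ _))
  refine hmax q hqS.1 ?_
  filter_upwards [hΩ.mem_nhds hqS.1] with x hx
  rcases le_total (f p) (f x) with hpx | hxp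
  · exact hq ⟨hx, hpx⟩
  · exact hxp.trans hqS.2

lemma nonpos_of_lapE_pos {d : ℕ} {Ω : Set (Ed d × ℝ)} {f : Ed d × ℝ → ℝ} (hΩ : IsOpen Ω)
    (hΩc : IsCompact (closure Ω)) (hf : ContDiffOn ℝ 2 f Ω) (hlap : ∀ p ∈ Ω, 0 < lapE f p)
    (hbd : ∀ q ∈ frontier Ω, ∀ η > 0, ∀ᶠ p in 𝓝[Ω] q, f p ≤ η) {p : Ed d × ℝ} (hp : p ∈ Ω) :
    f p ≤ 0 :=
  nonpos_of_forall_not_isLocalMax hΩ hΩc hf.continuousOn (fun q hq hmax =>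
    (lapE_nonpos_of_isLocalMax (hf.contDiffAt (hΩ.mem_nhds hq)) hmax).not_gt (hlap q hq)) hbd hp

/-! ### Sawtooth regions -/

/-- The sawtooth region over `E`, the union of the truncated cones with vertices in `E`. -/
def sawtooth {d : ℕ} (E : Set (Ed d)) (a h : ℝ) : Set (Ed d × ℝ) := ⋃ x ∈ E, coneT a h x

section Sawtooth

variable {d : ℕ} {E F : Set (Ed d)} {a h : ℝ} {p : Ed d × ℝ}

lemma mem_sawtooth : p ∈ sawtooth E a h ↔ 0 < p.2 ∧ p.2 < h ∧ p.1 ∈ thickening (a * p.2) E := by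
  simp only [sawtooth, coneT, Set.mem_iUnion₂, Set.mem_ofPred_eq, mem_thickening_iff, exists_prop]
  grind

lemma sawtooth_closure : sawtooth (closure E) a h = sawtooth E a h := by
  ext p
  simp only [mem_sawtooth, thickening_closure]

lemma sawtooth_mono {E' : Set (Ed d)} {h' : ℝ} (hE : E ⊆ E') (hh : h ≤ h') :
    sawtooth E a h ⊆ sawtooth E' a h' := fun p hp => by
  rw [mem_sawtooth] at hp ⊢
  exact ⟨hp.1, hp.2.1.trans_le hh, thickening_subset_of_subset _ hE hp.2.2⟩

lemma isOpen_sawtooth : IsOpen (sawtooth E a h) := by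
  refine isOpen_biUnion fun x _ => (isOpen_lt ?_ ?_).and ((isOpen_lt ?_ ?_).and
    (isOpen_lt ?_ ?_)) <;> fun_prop

lemma sawtooth_subset_closedBall_prod {x₀ : Ed d} {r : ℝ} (hE : E ⊆ closedBall x₀ r) (ha : 0 ≤ a) :
    sawtooth E a h ⊆ closedBall x₀ (r + a * h) ×ˢ Set.Icc 0 h := fun p hp => by
  obtain ⟨x, hx, hp0, hph, hpx⟩ := Set.mem_iUnion₂.1 hp
  refine ⟨mem_closedBall.2 ?_, hp0.le, hph.le⟩
  linarith [dist_triangle p.1 x x₀, mem_closedBall.1 (hE hx), mul_le_mul_of_nonneg_left hph.le ha]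

lemma isBounded_sawtooth (hE : Bornology.IsBounded E) (ha : 0 ≤ a) :
    Bornology.IsBounded (sawtooth E a h) := by
  obtain ⟨r, hr⟩ := hE.subset_closedBall 0
  exact (isBounded_closedBall.prod (isBounded_Icc 0 h)).subset
    (sawtooth_subset_closedBall_prod hr ha)

lemma closure_sawtooth_subset :
    closure (sawtooth E a h) ⊆ {p | 0 ≤ p.2 ∧ p.2 ≤ h ∧ infDist p.1 E ≤ a * p.2} := by
  refine closure_minimal (fun p hp => ?_) ((isClosed_le ?_ ?_).and ((isClosed_le ?_ ?_).and
    (isClosed_le ((continuous_infDist_pt E).comp continuous_fst) ?_)))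
  · obtain ⟨hp0, hph, hpE⟩ := mem_sawtooth.1 hp
    obtain ⟨x, hx, hpx⟩ := mem_thickening_iff.1 hpE
    exact ⟨hp0.le, hph.le, (infDist_le_dist_of_mem hx).trans hpx.le⟩
  all_goals fun_prop

lemma add_mem_sawtooth_of_mem_closure (hE : E.Nonempty) (ha : 0 < a) {ε h' : ℝ} (hε : 0 < ε)
    (hh' : h + ε < h') (hp : p ∈ closure (sawtooth E a h)) : p + (0, ε) ∈ sawtooth E a h' := by
  obtain ⟨hp0, hph, hpE⟩ := closure_sawtooth_subset hp
  refine mem_sawtooth.2 ⟨?_, ?_, ?_⟩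
  · simpa using by linarith
  · simpa using by linarith
  · have hlt : infDist p.1 E < a * (p.2 + ε) := hpE.trans_lt (by gcongr; linarith)
    simpa [mem_thickening_iff, infDist_lt_iff hE] using hlt

lemma frontier_sawtooth_cases (hF : IsClosed F) (hFne : F.Nonempty)
    (hp : p ∈ frontier (sawtooth F a h)) :
    (p.2 = 0 ∧ p.1 ∈ F) ∨
      (0 < p.2 ∧ p.2 ≤ h ∧ (p.2 = h ∨ Disjoint (ball p.1 (a * p.2)) F)) := by
  obtain ⟨hp0, hph, hpF⟩ := closure_sawtooth_subset hp.1
  have hnot := isOpen_sawtooth.interior_eq ▸ hp.2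
  rcases hp0.eq_or_lt with hp0 | hp0
  · refine Or.inl ⟨hp0.symm, (hF.mem_iff_infDist_zero hFne).2 (le_antisymm ?_ infDist_nonneg)⟩
    simpa [← hp0] using hpF
  · refine Or.inr ⟨hp0, hph, hph.eq_or_lt.imp_right fun hph => ?_⟩
    refine Set.disjoint_left.2 fun x hx hxF => hnot (mem_sawtooth.2 ⟨hp0, hph, ?_⟩)
    exact mem_thickening_iff.2 ⟨x, hxF, by rwa [dist_comm]⟩

end Sawtooth

/-! ### Comparison with Poisson integrals on sawtooth regions -/

/-- `v` is a `C²` function on `Ω` such that `v` and its Laplacian are bounded by `M`. -/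
structure LaplacianBoundedOn {d : ℕ} (v : Ed d × ℝ → ℝ) (M : ℝ) (Ω : Set (Ed d × ℝ)) : Prop where
  contDiffOn : ContDiffOn ℝ 2 v Ω
  abs_apply_le : ∀ p ∈ Ω, |v p| ≤ M
  abs_lapE_le : ∀ p ∈ Ω, |lapE v p| ≤ M

lemma LaplacianBoundedOn.neg {d : ℕ} {v : Ed d × ℝ → ℝ} {M : ℝ} {Ω : Set (Ed d × ℝ)}
    (hv : LaplacianBoundedOn v M Ω) : LaplacianBoundedOn (fun p => -v p) M Ω where
  contDiffOn := hv.contDiffOn.neg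
  abs_apply_le p hp := by simpa using hv.abs_apply_le p hp
  abs_lapE_le p hp := by simpa [lapE_neg] using hv.abs_lapE_le p hp

/-- The coefficient of the barrier on the sawtooth region `sawtooth F a h`, chosen so that the
barrier dominates `2M` on the lateral boundary and on the top. -/
def barrierConst (d : ℕ) (a h M : ℝ) : ℝ :=
  2 * M / (∫ w in ball (0 : Ed d) a, poissonKernelHS (w, 1)) + 2 * M / h + M * h

/-- The barrier on `sawtooth F a h`: a multiple of the harmonic measure of the complement of `F`
plus a quadratic polynomial in the height, which makes the Laplacian equal to `-2M`. -/
def sawtoothBarrier {d : ℕ} (F : Set (Ed d)) (a h M : ℝ) (p : Ed d × ℝ) : ℝ :=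
  barrierConst d a h M * (1 - poissonIntegral (F.indicator 1) p + p.2) - M * p.2 ^ 2

section Barrier

variable {d : ℕ} {F : Set (Ed d)} {a h M ε : ℝ} {v : Ed d × ℝ → ℝ} {p : Ed d × ℝ}

lemma integrable_of_eq_zero_outside_compact {X : Type*} [TopologicalSpace X] [MeasurableSpace X]
    {μ : Measure X} [IsFiniteMeasureOnCompacts μ] {φ : X → ℝ} (hφ : AEStronglyMeasurable φ μ)
    (hM : ∀ z, |φ z| ≤ M) {K : Set X} (hK : IsCompact K) (hφK : ∀ z ∉ K, φ z = 0) :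
    Integrable φ μ :=
  (integrableOn_iff_integrable_of_support_subset (Function.support_subset_iff'.2 hφK)).1
    (Measure.integrableOn_of_bounded hK.measure_ne_top hφ (Eventually.of_forall hM))

lemma abs_indicator_one_le {X : Type*} (F : Set X) (z : X) :
    |F.indicator (1 : X → ℝ) z| ≤ 1 := by
  by_cases hz : z ∈ F <;> simp [hz]

lemma poissonIntegral_indicator_one_le (hp : 0 < p.2) : poissonIntegral (F.indicator 1) p ≤ 1 :=
  (abs_le.1 (abs_poissonIntegral_le (abs_indicator_one_le F) hp)).2

lemma integrable_indicator_one (hF : IsCompact F) : Integrable (F.indicator (1 : Ed d → ℝ)) :=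
  (integrable_indicator_iff hF.measurableSet).2 (integrableOn_const hF.measure_ne_top)

lemma hasCompactSupport_indicator_one (hF : IsCompact F) :
    HasCompactSupport (F.indicator (1 : Ed d → ℝ)) :=
  HasCompactSupport.intro hF fun _ hz => Set.indicator_of_notMem hz _

lemma contDiffAt_sawtoothBarrier (hF : IsCompact F) (hp : 0 < p.2) :
    ContDiffAt ℝ 2 (sawtoothBarrier F a h M) p := by
  have hP : ContDiffAt ℝ 2 (poissonIntegral (F.indicator 1)) p :=
    (contDiffOn_poissonIntegral (integrable_indicator_one hF) (hasCompactSupport_indicator_one hF)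
      2).contDiffAt (isOpen_setOf_snd_pos.mem_nhds hp)
  unfold sawtoothBarrier
  fun_prop

lemma lapE_sawtoothBarrier (hF : IsCompact F) (hp : 0 < p.2) :
    lapE (sawtoothBarrier F a h M) p = -(2 * M) := by
  have hP : ContDiffAt ℝ 2 (poissonIntegral (F.indicator 1)) p :=
    (contDiffOn_poissonIntegral (integrable_indicator_one hF) (hasCompactSupport_indicator_one hF)
      2).contDiffAt (isOpen_setOf_snd_pos.mem_nhds hp)
  unfold sawtoothBarrier
  rw [lapE_sub (by fun_prop) (by fun_prop), lapE_const_mul, lapE_const_mul,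
    lapE_add (by fun_prop) (by fun_prop), lapE_sub (by fun_prop) hP, lapE_const, lapE_snd,
    lapE_snd_sq, lapE_poissonIntegral (integrable_indicator_one hF)
      (hasCompactSupport_indicator_one hF) hp]
  ring

lemma sawtoothBarrier_le (hM : 0 ≤ M) : sawtoothBarrier F a h M p ≤
    barrierConst d a h M * (1 - poissonIntegral (F.indicator 1) p + p.2) :=
  sub_le_self _ (by positivity)

lemma lateral_add_height_le_sawtoothBarrier (ha : 0 < a) (hM : 0 ≤ M) (hp : 0 < p.2)
    (hph : p.2 ≤ h) :
    2 * M / (∫ w in ball (0 : Ed d) a, poissonKernelHS (w, 1)) *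
      (1 - poissonIntegral (F.indicator 1) p) + 2 * M / h * p.2 ≤ sawtoothBarrier F a h M p := by
  have hδ := setIntegral_ball_poissonKernelHS_one_pos (d := d) ha
  have hh : 0 < h := hp.trans_le hph
  have hP := sub_nonneg.2 (poissonIntegral_indicator_one_le (F := F) hp)
  set δ := ∫ w in ball (0 : Ed d) a, poissonKernelHS (w, 1)
  have h1 : 0 ≤ (2 * M / h + M * h) * (1 - poissonIntegral (F.indicator 1) p) := by positivity
  have h2 : 0 ≤ 2 * M / δ * p.2 := by positivity
  have h3 : M * p.2 ^ 2 ≤ M * h * p.2 := by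
    rw [sq, ← mul_assoc]
    gcongr
  unfold sawtoothBarrier barrierConst
  linarith

lemma sawtoothBarrier_nonneg (ha : 0 < a) (hM : 0 ≤ M) (hp : 0 < p.2) (hph : p.2 ≤ h) :
    0 ≤ sawtoothBarrier F a h M p := by
  have hδ := setIntegral_ball_poissonKernelHS_one_pos (d := d) ha
  have hh : 0 < h := hp.trans_le hph
  have hP := sub_nonneg.2 (poissonIntegral_indicator_one_le (F := F) hp)
  exact le_trans (by positivity) (lateral_add_height_le_sawtoothBarrier ha hM hp hph)

lemma two_mul_le_sawtoothBarrier (hF : IsCompact F) (ha : 0 < a) (hM : 0 ≤ M) (hp : 0 < p.2)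
    (hph : p.2 ≤ h) (hside : p.2 = h ∨ Disjoint (ball p.1 (a * p.2)) F) :
    2 * M ≤ sawtoothBarrier F a h M p := by
  have hδ := setIntegral_ball_poissonKernelHS_one_pos (d := d) ha
  have hh : 0 < h := hp.trans_le hph
  have hP := sub_nonneg.2 (poissonIntegral_indicator_one_le (F := F) hp)
  refine le_trans ?_ (lateral_add_height_le_sawtoothBarrier ha hM hp hph)
  rcases hside with rfl | hside
  · rw [div_mul_cancel₀ _ hh.ne']
    exact le_add_of_nonneg_left (by positivity)
  · have hP' := poissonIntegral_indicator_le_of_disjoint_ball hF.measurableSet hp hside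
    set δ := ∫ w in ball (0 : Ed d) a, poissonKernelHS (w, 1)
    calc 2 * M = 2 * M / δ * δ := (div_mul_cancel₀ _ hδ.ne').symm
      _ ≤ 2 * M / δ * (1 - poissonIntegral (F.indicator 1) p) := by gcongr; linarith
      _ ≤ _ := le_add_of_nonneg_right (by positivity)

end Barrier

/-- The restriction of `v` to the slice of a sawtooth region over `F` at height `ε`, extended by
zero. -/
def sawtoothSlice {d : ℕ} (F : Set (Ed d)) (a : ℝ) (v : Ed d × ℝ → ℝ) (ε : ℝ) : Ed d → ℝ :=
  (thickening (a * ε) F).indicator fun t => v (t, ε)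

/-- The difference of the translate of `v` by `ε` in the vertical direction and the Poisson
integral of the values of `v` at height `ε`. -/
def sawtoothDefect {d : ℕ} (F : Set (Ed d)) (a : ℝ) (v : Ed d × ℝ → ℝ) (ε : ℝ) (p : Ed d × ℝ) : ℝ :=
  v (p + (0, ε)) - poissonIntegral (sawtoothSlice F a v ε) p

section Comparison

variable {d : ℕ} {F : Set (Ed d)} {a h M ε : ℝ} {v : Ed d × ℝ → ℝ} {p : Ed d × ℝ}

lemma mem_sawtooth_of_mem_thickening (hε : 0 < ε) (hεh : ε < h) {t : Ed d}
    (ht : t ∈ thickening (a * ε) F) : (t, ε) ∈ sawtooth F a h :=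
  mem_sawtooth.2 ⟨hε, hεh, ht⟩

lemma sawtoothDefect_neg (F : Set (Ed d)) (a : ℝ) (v : Ed d × ℝ → ℝ) (ε : ℝ) (p : Ed d × ℝ) :
    sawtoothDefect F a (fun p => -v p) ε p = -sawtoothDefect F a v ε p := by
  have hslice : sawtoothSlice F a (fun p => -v p) ε = fun t => -sawtoothSlice F a v ε t :=
    Set.indicator_neg _ _
  rw [sawtoothDefect, hslice, poissonIntegral_neg, sawtoothDefect, sub_neg_eq_add, neg_sub',
    sub_neg_eq_add]

lemma sawtoothSlice_of_mem (ha : 0 < a) (hε : 0 < ε) {t : Ed d} (ht : t ∈ F) :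
    sawtoothSlice F a v ε t = v (t, ε) :=
  Set.indicator_of_mem (self_subset_thickening (mul_pos ha hε) F ht) _

lemma continuousAt_sawtoothSlice (ha : 0 < a) (hε : 0 < ε) {t : Ed d} (ht : t ∈ F)
    (hv : ContinuousAt v (t, ε)) : ContinuousAt (sawtoothSlice F a v ε) t := by
  have hline : ContinuousAt (fun t => v (t, ε)) t :=
    ContinuousAt.comp (f := fun t => (t, ε)) hv (by fun_prop)
  refine hline.congr ?_
  filter_upwards [isOpen_thickening.mem_nhds (self_subset_thickening (mul_pos ha hε) F ht)]
    with s hs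
  exact (Set.indicator_of_mem hs fun t => v (t, ε)).symm

lemma sawtoothSlice_eq_zero (ha : 0 < a) (hεh : ε ≤ h) {t : Ed d}
    (ht : t ∉ cthickening (a * h) F) : sawtoothSlice F a v ε t = 0 :=
  Set.indicator_of_notMem
    (fun hmem => ht (thickening_subset_cthickening_of_le (by gcongr) F hmem)) _

namespace LaplacianBoundedOn

lemma continuousAt {Ω : Set (Ed d × ℝ)} (hv : LaplacianBoundedOn v M Ω) (hΩ : IsOpen Ω)
    (hp : p ∈ Ω) : ContinuousAt v p :=
  hv.contDiffOn.continuousOn.continuousAt (hΩ.mem_nhds hp)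

variable (hv : LaplacianBoundedOn v M (sawtooth F a (2 * h))) (hF : IsCompact F)
  (hFne : F.Nonempty) (ha : 0 < a) (hM : 0 < M) (hε : 0 < ε) (hεh : ε < h)

include hv hε hεh

lemma measurable_sawtoothSlice : Measurable (sawtoothSlice F a v ε) := by
  classical
  have hcont : ContinuousOn (fun t => v (t, ε)) (thickening (a * ε) F) :=
    hv.contDiffOn.continuousOn.comp (by fun_prop)
      fun t ht => mem_sawtooth_of_mem_thickening hε (by linarith) ht
  rw [sawtoothSlice, ← Set.piecewise_eq_indicator]
  exact hcont.measurable_piecewise continuousOn_const isOpen_thickening.measurableSet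

include hM

lemma abs_sawtoothSlice_le (t : Ed d) : |sawtoothSlice F a v ε t| ≤ M := by
  by_cases ht : t ∈ thickening (a * ε) F
  · simpa [sawtoothSlice, ht] using
      hv.abs_apply_le _ (mem_sawtooth_of_mem_thickening hε (by linarith) ht)
  · simpa [sawtoothSlice, ht] using hM.le

include ha

lemma tendsto_sawtoothDefect {t : Ed d} (ht : t ∈ F) :
    Tendsto (sawtoothDefect F a v ε) (𝓝[{p | 0 < p.2}] (t, 0)) (𝓝 0) := by
  have hvt : ContinuousAt v (t, ε) := hv.continuousAt isOpen_sawtooth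
    (mem_sawtooth_of_mem_thickening hε (by linarith)
      (self_subset_thickening (mul_pos ha hε) F ht))
  have hshift : Tendsto (fun q : Ed d × ℝ => q + (0, ε)) (𝓝 (t, 0)) (𝓝 (t, ε)) :=
    Continuous.tendsto' (by fun_prop) _ _ (by simp)
  have hP := tendsto_poissonIntegral_of_continuousAt (hv.measurable_sawtoothSlice hε hεh)
    (hv.abs_sawtoothSlice_le hM hε hεh) (continuousAt_sawtoothSlice ha hε ht hvt)
  rw [sawtoothSlice_of_mem ha hε ht] at hP
  have hsub := ((hvt.tendsto.comp hshift).mono_left nhdsWithin_le_nhds).sub hP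
  rwa [sub_self] at hsub

include hFne

lemma abs_sawtoothDefect_le (hp : p ∈ closure (sawtooth F a h)) (hp0 : 0 < p.2) :
    |sawtoothDefect F a v ε p| ≤ 2 * M := by
  rw [two_mul]
  exact (abs_sub _ _).trans (add_le_add
    (hv.abs_apply_le _ (add_mem_sawtooth_of_mem_closure hFne ha hε (by linarith) hp))
    (abs_poissonIntegral_le (hv.abs_sawtoothSlice_le hM hε hεh) hp0))

include hF

lemma contDiffAt_lapE_sawtoothDefect (hp : p ∈ closure (sawtooth F a h)) (hp0 : 0 < p.2) :
    ContDiffAt ℝ 2 (sawtoothDefect F a v ε) p ∧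
      lapE (sawtoothDefect F a v ε) p = lapE v (p + (0, ε)) := by
  have hmem := add_mem_sawtooth_of_mem_closure (h' := 2 * h) hFne ha hε (by linarith) hp
  have hvp : ContDiffAt ℝ 2 (fun q => v (q + (0, ε))) p :=
    (hv.contDiffOn.contDiffAt (isOpen_sawtooth.mem_nhds hmem)).comp p (by fun_prop)
  have hK : ∀ t ∉ cthickening (a * h) F, sawtoothSlice F a v ε t = 0 :=
    fun t => sawtoothSlice_eq_zero ha hεh.le
  have hint : Integrable (sawtoothSlice F a v ε) :=
    integrable_of_eq_zero_outside_compact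
      (hv.measurable_sawtoothSlice hε hεh).aestronglyMeasurable
      (hv.abs_sawtoothSlice_le hM hε hεh) hF.cthickening hK
  have hsupp : HasCompactSupport (sawtoothSlice F a v ε) := .intro hF.cthickening hK
  have hP : ContDiffAt ℝ 2 (poissonIntegral (sawtoothSlice F a v ε)) p :=
    (contDiffOn_poissonIntegral hint hsupp 2).contDiffAt (isOpen_setOf_snd_pos.mem_nhds hp0)
  refine ⟨hvp.sub hP, ?_⟩
  unfold sawtoothDefect
  rw [lapE_sub hvp hP, lapE_poissonIntegral hint hsupp hp0, sub_zero, lapE_comp_add_right]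

lemma eventually_sawtoothDefect_sub_sawtoothBarrier_le (hp : p ∈ frontier (sawtooth F a h))
    {η : ℝ} (hη : 0 < η) : ∀ᶠ q in 𝓝[sawtooth F a h] p,
      sawtoothDefect F a v ε q - sawtoothBarrier F a h M q ≤ η := by
  rcases frontier_sawtooth_cases hF.isClosed hFne hp with ⟨hp0, hpF⟩ | ⟨hp0, hph, hside⟩
  · have hlim := hv.tendsto_sawtoothDefect ha hM hε hεh hpF
    rw [show (p.1, 0) = p from Prod.ext rfl hp0.symm] at hlim
    have hsub : sawtooth F a h ⊆ {q | 0 < q.2} := fun q hq => (mem_sawtooth.1 hq).1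
    filter_upwards [(hlim.mono_left (nhdsWithin_mono p hsub)).eventually_lt_const hη,
      self_mem_nhdsWithin] with q hqη hq
    obtain ⟨hq0, hqh, -⟩ := mem_sawtooth.1 hq
    linarith [sawtoothBarrier_nonneg (F := F) ha hM.le hq0 hqh.le]
  · have hcont := (hv.contDiffAt_lapE_sawtoothDefect hF hFne ha hM hε hεh hp.1 hp0).1.sub
      (contDiffAt_sawtoothBarrier (a := a) (h := h) (M := M) hF hp0)
    refine (hcont.continuousAt.eventually_le_const (lt_of_le_of_lt ?_ hη)).filter_mono
      nhdsWithin_le_nhds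
    linarith [(abs_le.1 (hv.abs_sawtoothDefect_le hFne ha hM hε hεh hp.1 hp0)).2,
      two_mul_le_sawtoothBarrier hF ha hM.le hp0 hph hside]

lemma sawtoothDefect_le_sawtoothBarrier (hp : p ∈ sawtooth F a h) :
    sawtoothDefect F a v ε p ≤ sawtoothBarrier F a h M p := by
  have hdefect {q : Ed d × ℝ} (hq : q ∈ sawtooth F a h) :=
    hv.contDiffAt_lapE_sawtoothDefect hF hFne ha hM hε hεh (subset_closure hq) (mem_sawtooth.1 hq).1
  have hbarrier {q : Ed d × ℝ} (hq : q ∈ sawtooth F a h) :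
      ContDiffAt ℝ 2 (sawtoothBarrier F a h M) q :=
    contDiffAt_sawtoothBarrier hF (mem_sawtooth.1 hq).1
  refine sub_nonpos.1 (nonpos_of_lapE_pos (f := fun q =>
      sawtoothDefect F a v ε q - sawtoothBarrier F a h M q) isOpen_sawtooth
    (isBounded_sawtooth hF.isBounded ha.le).isCompact_closure
    (fun q hq => ((hdefect hq).1.sub (hbarrier hq)).contDiffWithinAt) (fun q hq => ?_)
    (fun q hq η hη => hv.eventually_sawtoothDefect_sub_sawtoothBarrier_le hF hFne ha hM hε hεh
      hq hη) hp)
  have hlap := hv.abs_lapE_le _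
    (add_mem_sawtooth_of_mem_closure hFne ha hε (by linarith) (subset_closure hq))
  rw [lapE_sub (hdefect hq).1 (hbarrier hq), (hdefect hq).2,
    lapE_sawtoothBarrier hF (mem_sawtooth.1 hq).1]
  linarith [(abs_le.1 hlap).1]

lemma abs_sawtoothDefect_le_barrier (hp : p ∈ sawtooth F a h) :
    |sawtoothDefect F a v ε p| ≤
      barrierConst d a h M * (1 - poissonIntegral (F.indicator 1) p + p.2) := by
  refine (abs_le'.2 ⟨hv.sawtoothDefect_le_sawtoothBarrier hF hFne ha hM hε hεh hp, ?_⟩).trans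
    (sawtoothBarrier_le hM.le)
  rw [← sawtoothDefect_neg]
  exact hv.neg.sawtoothDefect_le_sawtoothBarrier hF hFne ha hM hε hεh hp

end LaplacianBoundedOn

end Comparison

/-! ### Weak limits of bounded families -/

lemma exists_ultrafilter_tendsto_inner {H ι : Type*} [NormedAddCommGroup H]
    [InnerProductSpace ℝ H] [CompleteSpace H] (l : Filter ι) [l.NeBot] {f : ι → H} {C : ℝ}
    (hf : ∀ i, ‖f i‖ ≤ C) :
    ∃ U : Ultrafilter ι, ↑U ≤ l ∧
      ∃ w : H, ∀ g, Tendsto (fun i => ⟪f i, g⟫) U (𝓝 ⟪w, g⟫) := by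
  let T (i : ι) : WeakDual ℝ H := StrongDual.toWeakDual (InnerProductSpace.toDual ℝ H (f i))
  have hT (i : ι) : T i ∈ WeakDual.toStrongDual ⁻¹' closedBall (0 : StrongDual ℝ H) C := by
    simpa [T] using hf i
  obtain ⟨w, -, hw⟩ :=
    (WeakDual.isCompact_closedBall (𝕜 := ℝ) (0 : StrongDual ℝ H) C).ultrafilter_le_nhds
      ((Ultrafilter.of l).map T) (tendsto_principal.2 (Eventually.of_forall hT))
  refine ⟨Ultrafilter.of l, Ultrafilter.of_le l,
    (InnerProductSpace.toDual ℝ H).symm (WeakDual.toStrongDual w), fun g => ?_⟩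
  rw [InnerProductSpace.toDual_symm_apply]
  exact ((WeakDual.eval_continuous g).tendsto w).comp hw

section WeakLimits

variable {Z ι : Type*} [MeasurableSpace Z] {μ : Measure Z} (l : Filter ι) [l.NeBot]
  {φ : ι → Z → ℝ}

lemma exists_ultrafilter_tendsto_integral_mul_of_eLpNorm_le {C : NNReal}
    (hφ : ∀ i, MemLp (φ i) 2 μ) (hC : ∀ i, eLpNorm (φ i) 2 μ ≤ C) :
    ∃ U : Ultrafilter ι, ↑U ≤ l ∧ ∃ w : Z → ℝ, Measurable w ∧ MemLp w 2 μ ∧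
      ∀ g, MemLp g 2 μ → Tendsto (fun i => ∫ z, φ i z * g z ∂μ) U (𝓝 (∫ z, w z * g z ∂μ)) := by
  have hinner {f g : Z → ℝ} (hf : MemLp f 2 μ) (hg : MemLp g 2 μ) :
      ⟪hf.toLp, hg.toLp⟫ = ∫ z, f z * g z ∂μ := by
    rw [L2.inner_def]
    refine integral_congr_ae ?_
    filter_upwards [hf.coeFn_toLp, hg.coeFn_toLp] with z hfz hgz
    rw [hfz, hgz]
    simp [mul_comm]
  have hnorm (i : ι) : ‖(hφ i).toLp‖ ≤ C := by
    rw [Lp.norm_toLp]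
    exact ENNReal.toReal_le_coe_of_le_coe (hC i)
  obtain ⟨U, hUl, w, hw⟩ := exists_ultrafilter_tendsto_inner l hnorm
  refine ⟨U, hUl, w, (Lp.stronglyMeasurable w).measurable, Lp.memLp w, fun g hg => ?_⟩
  have hwg := hw hg.toLp
  rw [← Lp.toLp_coeFn w (Lp.memLp w)] at hwg
  simpa only [hinner] using hwg

lemma ae_mem_Icc_of_tendsto_setIntegral [IsFiniteMeasure μ] {w : Z → ℝ} {m M : ℝ}
    (hφ : ∀ i, Integrable (φ i) μ) (hb : ∀ i z, φ i z ∈ Set.Icc m M) (hw : Integrable w μ)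
    (hlim : ∀ s, MeasurableSet s →
      Tendsto (fun i => ∫ z in s, φ i z ∂μ) l (𝓝 (∫ z in s, w z ∂μ))) :
    ∀ᵐ z ∂μ, w z ∈ Set.Icc m M := by
  have hlower : ∀ᵐ z ∂μ, m ≤ w z :=
    ae_le_of_forall_setIntegral_le (integrable_const m) hw fun s hs _ =>
      ge_of_tendsto (hlim s hs) (Eventually.of_forall fun i =>
        integral_mono (integrable_const m) (hφ i).integrableOn fun z => (hb i z).1)
  have hupper : ∀ᵐ z ∂μ, w z ≤ M :=
    ae_le_of_forall_setIntegral_le hw (integrable_const M) fun s hs _ =>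
      le_of_tendsto (hlim s hs) (Eventually.of_forall fun i =>
        integral_mono (hφ i).integrableOn (integrable_const M) fun z => (hb i z).2)
  filter_upwards [hlower, hupper] with z hzl hzu using ⟨hzl, hzu⟩

lemma exists_ultrafilter_tendsto_integral_mul [IsFiniteMeasure μ] {M : ℝ}
    (hφ : ∀ i, Measurable (φ i)) (hM : ∀ i z, |φ i z| ≤ M) :
    ∃ U : Ultrafilter ι, ↑U ≤ l ∧ ∃ ψ : Z → ℝ, Measurable ψ ∧ (∀ z, |ψ z| ≤ M) ∧
      ∀ g, MemLp g 2 μ →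
        Tendsto (fun i => ∫ z, φ i z * g z ∂μ) U (𝓝 (∫ z, ψ z * g z ∂μ)) := by
  have hφ2 (i : ι) : MemLp (φ i) 2 μ :=
    MemLp.of_bound (hφ i).aestronglyMeasurable M (Eventually.of_forall (hM i))
  have hC (i : ι) : eLpNorm (φ i) 2 μ ≤
      ↑(μ Set.univ ^ (2⁻¹ : ℝ) * ENNReal.ofReal M).toNNReal := by
    rw [ENNReal.coe_toNNReal (by finiteness)]
    simpa using eLpNorm_le_of_ae_bound (p := 2) (Eventually.of_forall (f := ae μ) (hM i))
  obtain ⟨U, hUl, w, hwm, hw2, hw⟩ :=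
    exists_ultrafilter_tendsto_integral_mul_of_eLpNorm_le l hφ2 hC
  have hset (s : Set Z) (hs : MeasurableSet s) :
      Tendsto (fun i => ∫ z in s, φ i z ∂μ) U (𝓝 (∫ z in s, w z ∂μ)) := by
    simpa only [← Set.indicator_mul_right, mul_one, integral_indicator hs] using
      hw (s.indicator fun _ => 1) (memLp_indicator_const 2 hs 1 (Or.inr (measure_ne_top μ s)))
  have hwM : ∀ᵐ z ∂μ, w z ∈ Set.Icc (-M) M :=
    ae_mem_Icc_of_tendsto_setIntegral U (fun i => (hφ2 i).integrable one_le_two)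
      (fun i z => abs_le.1 (hM i z)) (hw2.integrable one_le_two) hset
  have hM0 (z : Z) : 0 ≤ M := (abs_nonneg _).trans (hM l.nonempty_of_neBot.some z)
  refine ⟨U, hUl, fun z => max (-M) (min M (w z)),
    measurable_const.max (measurable_const.min hwm),
    fun z => abs_le.2 ⟨le_max_left _ _, max_le (by linarith [hM0 z]) (min_le_left _ _)⟩,
    fun g hg => ?_⟩
  convert! hw g hg using 2
  refine integral_congr_ae ?_
  filter_upwards [hwM] with z hz
  rw [min_eq_right hz.2, max_eq_right hz.1]

end WeakLimits

section NontangentialLimits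

variable {d : ℕ} {F : Set (Ed d)} {a h M : ℝ} {v : Ed d × ℝ → ℝ}

lemma exists_ultrafilter_tendsto_poissonIntegral {ι : Type*} (l : Filter ι) [l.NeBot]
    {φ : ι → Ed d → ℝ} {K : Set (Ed d)} (hK : IsCompact K) (hφ : ∀ i, Measurable (φ i))
    (hM : ∀ i z, |φ i z| ≤ M) (hφK : ∀ i, ∀ z ∉ K, φ i z = 0) :
    ∃ U : Ultrafilter ι, ↑U ≤ l ∧ ∃ ψ : Ed d → ℝ, Measurable ψ ∧ (∀ z, |ψ z| ≤ M) ∧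
      ∀ p : Ed d × ℝ, 0 < p.2 →
        Tendsto (fun i => poissonIntegral (φ i) p) U (𝓝 (poissonIntegral ψ p)) := by
  have : IsFiniteMeasure (volume.restrict K) := isFiniteMeasure_restrict.2 hK.measure_lt_top.ne
  obtain ⟨U, hUl, ψ, hψm, hψM, hψ⟩ :=
    exists_ultrafilter_tendsto_integral_mul (μ := volume.restrict K) l hφ hM
  have hψK (z : Ed d) : |K.indicator ψ z| ≤ M := by
    rw [← Real.norm_eq_abs]
    exact (norm_indicator_le_norm_self ψ z).trans (hψM z)
  refine ⟨U, hUl, K.indicator ψ, hψm.indicator hK.measurableSet, hψK, fun p hp => ?_⟩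
  have hrestrict {χ : Ed d → ℝ} (hχ : ∀ z ∉ K, χ z = 0) :
      poissonIntegral χ p = ∫ z in K, χ z * poissonKernelHS (p - (z, 0)) :=
    (setIntegral_eq_integral_of_forall_compl_eq_zero fun z hz => by rw [hχ z hz, zero_mul]).symm
  have hkernel : Continuous fun z : Ed d => poissonKernelHS (p - (z, 0)) :=
    continuous_iff_continuousAt.2 fun z => (contDiffAt_poissonKernelHS (n := 0) (by simpa using hp)
      ).continuousAt.comp (f := fun z : Ed d => p - (z, 0)) (by fun_prop)
  obtain ⟨B, hB⟩ := hK.exists_bound_of_continuousOn hkernel.continuousOn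
  have hindicator : poissonIntegral (K.indicator ψ) p =
      ∫ z in K, ψ z * poissonKernelHS (p - (z, 0)) := by
    rw [hrestrict fun z hz => Set.indicator_of_notMem hz ψ]
    exact setIntegral_congr_fun hK.measurableSet fun z hz => by
      simp only [Set.indicator_of_mem hz]
  simp only [hindicator, hrestrict (hφK _)]
  exact hψ _ (MemLp.of_bound hkernel.aestronglyMeasurable B (ae_restrict_of_forall_mem
    hK.measurableSet hB))

namespace LaplacianBoundedOn

lemma exists_abs_sub_poissonIntegral_le (hv : LaplacianBoundedOn v M (sawtooth F a (2 * h)))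
    (hF : IsCompact F) (hFne : F.Nonempty) (ha : 0 < a) (hh : 0 < h) (hM : 0 < M) :
    ∃ ψ : Ed d → ℝ, Measurable ψ ∧ (∀ z, |ψ z| ≤ M) ∧ ∀ p ∈ sawtooth F a h,
      |v p - poissonIntegral ψ p| ≤
        barrierConst d a h M * (1 - poissonIntegral (F.indicator 1) p + p.2) := by
  let l : Filter (Set.Ioo 0 h) := comap (↑) (𝓝 (0 : ℝ))
  have : l.NeBot := mem_closure_iff_comap_neBot.1 (by simp [closure_Ioo hh.ne, hh.le])
  obtain ⟨U, hUl, ψ, hψm, hψM, hψ⟩ := exists_ultrafilter_tendsto_poissonIntegral l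
    (φ := fun ε => sawtoothSlice F a v ε) (hF.cthickening (r := a * h))
    (fun ε => hv.measurable_sawtoothSlice ε.2.1 ε.2.2)
    (fun ε => hv.abs_sawtoothSlice_le hM ε.2.1 ε.2.2)
    (fun ε z hz => sawtoothSlice_eq_zero ha ε.2.2.le hz)
  refine ⟨ψ, hψm, hψM, fun p hp => ?_⟩
  have htranslate : Tendsto (fun ε : Set.Ioo 0 h => v (p + (0, (ε : ℝ)))) U (𝓝 (v p)) := by
    have hvp : ContinuousAt v (p + (0, 0)) := by
      rw [← Prod.zero_eq_mk, add_zero]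
      exact hv.continuousAt isOpen_sawtooth (sawtooth_mono subset_rfl (by linarith) hp)
    have hshift : ContinuousAt (fun ε : ℝ => v (p + (0, ε))) 0 :=
      hvp.comp (f := fun ε : ℝ => p + (0, ε)) (by fun_prop)
    simpa [Function.comp_def, ← Prod.zero_eq_mk] using
      hshift.tendsto.comp (tendsto_comap.mono_left hUl)
  exact le_of_tendsto (htranslate.sub (hψ p (mem_sawtooth.1 hp).1)).abs (Eventually.of_forall
    fun ε => hv.abs_sawtoothDefect_le_barrier hF hFne ha hM ε.2.1 ε.2.2 hp)

lemma ae_exists_tendsto (hv : LaplacianBoundedOn v M (sawtooth F a (2 * h))) (hF : IsCompact F)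
    (ha : 0 < a) (hh : 0 < h) (hM : 0 < M) :
    ∀ᵐ x : Ed d, x ∈ F → ∃ L : ℝ, Tendsto v (𝓝[cone a x] (x, 0)) (𝓝 L) := by
  obtain rfl | hFne := F.eq_empty_or_nonempty
  · simp
  obtain ⟨ψ, hψm, hψM, hψ⟩ := hv.exists_abs_sub_poissonIntegral_le hF hFne ha hh hM
  filter_upwards [ae_tendsto_poissonIntegral hψm hψM a,
    ae_tendsto_poissonIntegral (measurable_one.indicator hF.measurableSet)
      (abs_indicator_one_le F) a] with x hx hxind hxF
  have hheight : Tendsto (fun p : Ed d × ℝ => p.2) (𝓝[cone a x] (x, 0)) (𝓝 0) :=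
    (continuous_snd.tendsto (x, (0 : ℝ))).mono_left nhdsWithin_le_nhds
  have hbound : Tendsto (fun p : Ed d × ℝ =>
      barrierConst d a h M * (1 - poissonIntegral (F.indicator 1) p + p.2))
      (𝓝[cone a x] (x, 0)) (𝓝 0) := by
    simpa [hxF] using ((hxind.const_sub 1).add hheight).const_mul (barrierConst d a h M)
  have hdiff : Tendsto (fun p => v p - poissonIntegral ψ p) (𝓝[cone a x] (x, 0)) (𝓝 0) := by
    refine squeeze_zero_norm' ?_ hbound
    filter_upwards [self_mem_nhdsWithin, hheight.eventually_lt_const hh] with p hp hph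
    exact hψ p (Set.mem_iUnion₂.2 ⟨x, hxF, hp.1, hph, hp.2⟩)
  exact ⟨ψ x, by simpa using hdiff.add hx⟩

end LaplacianBoundedOn

end NontangentialLimits

/-! ### The Dunkl weight -/

/-- The square root `∏ |⟨α, x⟩| ^ κ(α)` of the Dunkl weight, as a function on `ℝ^d × ℝ`. It is
written as an exponential, which gives the product at regular points since `Real.log` is even. -/
def sqrtDunklWeight {d : ℕ} (Rp : Finset (Ed d)) (κ : Ed d → ℝ) (p : Ed d × ℝ) : ℝ :=
  Real.exp (∑ α ∈ Rp, κ α * Real.log ⟪α, p.1⟫)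

section Weight

variable {d : ℕ} {Rp : Finset (Ed d)} {κ : Ed d → ℝ} {u : Ed d × ℝ → ℝ} {p : Ed d × ℝ}

lemma sqrtDunklWeight_pos : 0 < sqrtDunklWeight Rp κ p :=
  Real.exp_pos _

lemma contDiffAt_sqrtDunklWeight {n : WithTop ℕ∞} (hp : isRegular Rp p.1) :
    ContDiffAt ℝ n (sqrtDunklWeight Rp κ) p :=
  ContDiffAt.exp <| ContDiffAt.sum fun α hα =>
    contDiffAt_const.mul ((contDiffAt_const.inner ℝ contDiffAt_fst).log (hp α hα))

lemma fderiv_sqrtDunklWeight (hp : isRegular Rp p.1) (e : Ed d × ℝ) :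
    fderiv ℝ (sqrtDunklWeight Rp κ) p e =
      sqrtDunklWeight Rp κ p * ∑ α ∈ Rp, κ α * (⟪α, e.1⟫ / ⟪α, p.1⟫) := by
  have hlog (α : Ed d) (hα : α ∈ Rp) :
      HasFDerivAt (fun q : Ed d × ℝ => κ α * Real.log ⟪α, q.1⟫)
        (κ α • (⟪α, p.1⟫⁻¹ • (innerSL ℝ α).comp (ContinuousLinearMap.fst ℝ (Ed d) ℝ))) p :=
    ((((innerSL ℝ α).comp (ContinuousLinearMap.fst ℝ (Ed d) ℝ)).hasFDerivAt).log
      (hp α hα)).const_mul (κ α)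
  have hweight : HasFDerivAt (sqrtDunklWeight Rp κ) _ p := (HasFDerivAt.fun_sum hlog).exp
  simp [hweight.fderiv, sqrtDunklWeight, div_eq_inv_mul]

lemma sum_apply_mul_map_single (T : Ed d × ℝ →L[ℝ] ℝ) (α : Ed d) :
    ∑ i, α i * T (EuclideanSpace.single i 1, 0) = T (α, 0) := by
  let S := T.comp (ContinuousLinearMap.inl ℝ (Ed d) ℝ)
  calc ∑ i, α i * S (EuclideanSpace.single i 1)
      = S (∑ i, α i • EuclideanSpace.single i 1) := by simp only [map_sum, map_smul, smul_eq_mul]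
    _ = S α := by simpa using congrArg S ((EuclideanSpace.basisFun (Fin d) ℝ).sum_repr α)

lemma sum_fderiv_sqrtDunklWeight_mul_fderiv (hp : isRegular Rp p.1) :
    ∑ i, fderiv ℝ (sqrtDunklWeight Rp κ) p (EuclideanSpace.single i 1, 0) *
        fderiv ℝ u p (EuclideanSpace.single i 1, 0) =
      sqrtDunklWeight Rp κ p * ∑ α ∈ Rp, κ α * (fderiv ℝ u p (α, 0) / ⟪α, p.1⟫) := by
  simp only [fderiv_sqrtDunklWeight hp, Finset.mul_sum, Finset.sum_mul]
  rw [Finset.sum_comm]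
  refine Finset.sum_congr rfl fun α _ => ?_
  rw [← sum_apply_mul_map_single (fderiv ℝ u p) α, Finset.sum_div, Finset.mul_sum, Finset.mul_sum]
  refine Finset.sum_congr rfl fun i _ => ?_
  rw [EuclideanSpace.inner_single_right, one_mul, conj_trivial]
  ring

lemma lapE_sqrtDunklWeight_mul (hp : isRegular Rp p.1) (hu : ContDiffAt ℝ 2 u p) :
    lapE (fun q => sqrtDunklWeight Rp κ q * u q) p =
      sqrtDunklWeight Rp κ p * (dunklLap Rp κ u p +
        2 * ∑ α ∈ Rp, κ α * ((u p - u (reflAt α p.1, p.2)) / ⟪α, p.1⟫ ^ 2)) +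
      u p * lapE (sqrtDunklWeight Rp κ) p := by
  have hy : fderiv ℝ (sqrtDunklWeight Rp κ) p (0, 1) = 0 := by simp [fderiv_sqrtDunklWeight hp]
  rw [lapE_mul (contDiffAt_sqrtDunklWeight hp) hu, sum_fderiv_sqrtDunklWeight_mul_fderiv hp, hy,
    dunklLap]
  simp only [mul_sub, Finset.sum_sub_distrib]
  ring

lemma abs_sum_reflection_le {M : ℝ} (hup : |u p| ≤ M)
    (hur : ∀ α ∈ Rp, |u (reflAt α p.1, p.2)| ≤ M) :
    |∑ α ∈ Rp, κ α * ((u p - u (reflAt α p.1, p.2)) / ⟪α, p.1⟫ ^ 2)| ≤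
      2 * M * ∑ α ∈ Rp, |κ α| / ⟪α, p.1⟫ ^ 2 := by
  rw [Finset.mul_sum]
  refine (Finset.abs_sum_le_sum_abs _ _).trans (Finset.sum_le_sum fun α hα => ?_)
  have hdiff : |u p - u (reflAt α p.1, p.2)| ≤ 2 * M := by
    linarith [abs_sub (u p) (u (reflAt α p.1, p.2)), hur α hα]
  rw [abs_mul, abs_div, abs_sq, ← mul_div_assoc, mul_comm, ← mul_div_assoc]
  gcongr

/-- The product of `sqrtDunklWeight Rp κ` with a `κ`-harmonic function which is bounded by `M` on a
reflection invariant set is bounded by `M` times this quantity, and so is its Laplacian. -/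
def sqrtDunklWeightBound (Rp : Finset (Ed d)) (κ : Ed d → ℝ) (p : Ed d × ℝ) : ℝ :=
  sqrtDunklWeight Rp κ p * (1 + 4 * ∑ α ∈ Rp, |κ α| / ⟪α, p.1⟫ ^ 2) +
    |lapE (sqrtDunklWeight Rp κ) p|

lemma continuousAt_sqrtDunklWeightBound (hp : isRegular Rp p.1) :
    ContinuousAt (sqrtDunklWeightBound Rp κ) p := by
  have hW : ContDiffAt ℝ 2 (sqrtDunklWeight Rp κ) p := contDiffAt_sqrtDunklWeight hp
  have hsum : ContinuousAt (fun q : Ed d × ℝ => ∑ α ∈ Rp, |κ α| / ⟪α, q.1⟫ ^ 2) p :=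
    tendsto_finsetSum _ fun α hα =>
      ContinuousAt.div (by fun_prop) (by fun_prop) (pow_ne_zero 2 (hp α hα))
  exact (hW.continuousAt.mul (continuousAt_const.add (continuousAt_const.mul hsum))).add
    (continuousAt_lapE hW).abs

lemma abs_sqrtDunklWeight_mul_le {M : ℝ} (hup : |u p| ≤ M) :
    |sqrtDunklWeight Rp κ p * u p| ≤ M * sqrtDunklWeightBound Rp κ p := by
  have hW : 0 < sqrtDunklWeight Rp κ p := sqrtDunklWeight_pos
  have hsum : 0 ≤ ∑ α ∈ Rp, |κ α| / ⟪α, p.1⟫ ^ 2 := Finset.sum_nonneg fun α _ => by positivity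
  have hbound : sqrtDunklWeight Rp κ p ≤ sqrtDunklWeightBound Rp κ p :=
    (le_mul_of_one_le_right hW.le (by linarith)).trans (le_add_of_nonneg_right (abs_nonneg _))
  rw [abs_mul, abs_of_pos hW, mul_comm]
  exact mul_le_mul hup hbound hW.le ((abs_nonneg _).trans hup)

lemma abs_lapE_sqrtDunklWeight_mul_le {M : ℝ} (hp : isRegular Rp p.1) (hu : ContDiffAt ℝ 2 u p)
    (hlap : dunklLap Rp κ u p = 0) (hup : |u p| ≤ M)
    (hur : ∀ α ∈ Rp, |u (reflAt α p.1, p.2)| ≤ M) :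
    |lapE (fun q => sqrtDunklWeight Rp κ q * u q) p| ≤ M * sqrtDunklWeightBound Rp κ p := by
  have hW : 0 < sqrtDunklWeight Rp κ p := sqrtDunklWeight_pos
  rw [lapE_sqrtDunklWeight_mul hp hu, hlap, zero_add]
  calc _ ≤ sqrtDunklWeight Rp κ p * (2 * (2 * M * ∑ α ∈ Rp, |κ α| / ⟪α, p.1⟫ ^ 2)) +
        M * |lapE (sqrtDunklWeight Rp κ) p| := by
        refine (abs_add_le _ _).trans ?_
        rw [abs_mul, abs_mul, abs_mul, abs_of_pos hW, abs_two]
        gcongr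
        exact abs_sum_reflection_le hup hur
    _ ≤ M * sqrtDunklWeightBound Rp κ p := by
        have hMW : 0 ≤ M * sqrtDunklWeight Rp κ p := mul_nonneg ((abs_nonneg _).trans hup) hW.le
        rw [sqrtDunklWeightBound]
        linarith

lemma exists_laplacianBoundedOn_sqrtDunklWeight_mul {M : ℝ} {K Ω : Set (Ed d × ℝ)}
    (hK : IsCompact K) (hKR : ∀ p ∈ K, isRegular Rp p.1) (hΩ : IsOpen Ω) (hΩK : Ω ⊆ K)
    (hu : KHarmonicOn Rp Rp κ u Ω) (hub : ∀ p ∈ Ω, |u p| ≤ M)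
    (hur : ∀ p ∈ Ω, ∀ α ∈ Rp, |u (reflAt α p.1, p.2)| ≤ M) :
    ∃ C > 0, LaplacianBoundedOn (fun p => sqrtDunklWeight Rp κ p * u p) C Ω := by
  obtain ⟨C, hC⟩ := hK.exists_bound_of_continuousOn (f := fun p => M * sqrtDunklWeightBound Rp κ p)
    fun p hp => (continuousAt_const.mul
      (continuousAt_sqrtDunklWeightBound (hKR p hp))).continuousWithinAt
  have hCΩ (p : Ed d × ℝ) (hp : p ∈ Ω) : M * sqrtDunklWeightBound Rp κ p ≤ max C 1 :=
    (le_abs_self _).trans ((hC p (hΩK hp)).trans (le_max_left C 1))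
  have huc (p : Ed d × ℝ) (hp : p ∈ Ω) : ContDiffAt ℝ 2 u p := hu.1.contDiffAt (hΩ.mem_nhds hp)
  exact ⟨max C 1, by positivity,
    fun p hp => ((contDiffAt_sqrtDunklWeight (hKR p (hΩK hp))).mul (huc p hp)).contDiffWithinAt,
    fun p hp => (abs_sqrtDunklWeight_mul_le (hub p hp)).trans (hCΩ p hp),
    fun p hp => (abs_lapE_sqrtDunklWeight_mul_le (hKR p (hΩK hp)) (huc p hp)
      (hu.2 p hp (hKR p (hΩK hp))) (hub p hp) (hur p hp)).trans (hCΩ p hp)⟩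

lemma exists_tendsto_of_sqrtDunklWeight_mul {S : Set (Ed d × ℝ)} (hp : isRegular Rp p.1)
    (hlim : ∃ L, Tendsto (fun q => sqrtDunklWeight Rp κ q * u q) (𝓝[S] p) (𝓝 L)) :
    ∃ L, Tendsto u (𝓝[S] p) (𝓝 L) := by
  obtain ⟨L, hL⟩ := hlim
  have hW : Tendsto (sqrtDunklWeight Rp κ) (𝓝[S] p) (𝓝 (sqrtDunklWeight Rp κ p)) :=
    ((contDiffAt_sqrtDunklWeight (n := 0) hp).continuousAt.tendsto).mono_left nhdsWithin_le_nhds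
  exact ⟨_, (hL.div hW sqrtDunklWeight_pos.ne').congr fun q =>
    mul_div_cancel_left₀ _ sqrtDunklWeight_pos.ne'⟩

end Weight

/-! ### Reflections and regular points -/

section Reflections

variable {d : ℕ} {R Rp : Finset (Ed d)} {E : Set (Ed d)} {a h : ℝ} {α : Ed d}

lemma dist_reflAt (hα : ⟪α, α⟫ = (2 : ℝ)) (x z : Ed d) :
    dist (reflAt α x) (reflAt α z) = dist x z := by
  have hsub : reflAt α x - reflAt α z = (x - z) - ⟪α, x - z⟫ • α := by
    simp only [reflAt, inner_sub_right, sub_smul]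
    abel
  rw [dist_eq_norm, dist_eq_norm, hsub, ← sq_eq_sq₀ (norm_nonneg _) (norm_nonneg _),
    norm_sub_sq_real, norm_smul, mul_pow, inner_smul_right, real_inner_comm (x - z) α,
    ← real_inner_self_eq_norm_sq α, hα, Real.norm_eq_abs, sq_abs]
  ring

lemma reflAt_mem_sawtooth (hα : ⟪α, α⟫ = (2 : ℝ)) (hE : Set.MapsTo (reflAt α) E E)
    {p : Ed d × ℝ} (hp : p ∈ sawtooth E a h) : (reflAt α p.1, p.2) ∈ sawtooth E a h := by
  obtain ⟨x, hx, hp0, hph, hpx⟩ := Set.mem_iUnion₂.1 hp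
  exact Set.mem_iUnion₂.2 ⟨reflAt α x, hE hx, hp0, hph, (dist_reflAt hα p.1 x).trans_lt hpx⟩

lemma GInvSet.mapsTo_reflAt (hE : GInvSet R E) (hα : α ∈ R) : Set.MapsTo (reflAt α) E E := by
  have hmem : reflAt α ∈ dunklGroup R := Submonoid.subset_closure ⟨α, hα, rfl⟩
  exact Set.mapsTo_iff_image_subset.2 (hE _ hmem).subset

lemma isOpen_setOf_isRegular : IsOpen {x : Ed d | isRegular R x} := by
  simp only [isRegular, Set.ofPred_forall]
  exact isOpen_biInter_finset fun α _ => isOpen_ne_fun (by fun_prop) continuous_const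

lemma ae_isRegular (hR : ∀ α ∈ R, α ≠ 0) : ∀ᵐ x : Ed d, isRegular R x := by
  refine R.eventually_all.2 fun α hα => ?_
  have hker : (innerSL ℝ α).ker ≠ ⊤ := fun htop => hR α hα <| by
    simpa using (htop ▸ Submodule.mem_top : α ∈ (innerSL ℝ α).ker)
  have hnull := Measure.addHaar_submodule volume _ hker
  filter_upwards [measure_eq_zero_iff_ae_notMem.1 hnull] with x hx
  simpa using hx

end Reflections

section DunklHarmonic

variable {d : ℕ} {R Rp : Finset (Ed d)} {κ : Ed d → ℝ} {E : Set (Ed d)} {a h M : ℝ}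
  {u : Ed d × ℝ → ℝ}

lemma KHarmonicOn.mono {Ω Ω' : Set (Ed d × ℝ)} (hu : KHarmonicOn R Rp κ u Ω) (hΩ : Ω' ⊆ Ω) :
    KHarmonicOn R Rp κ u Ω' :=
  ⟨hu.1.mono hΩ, fun p hp => hu.2 p (hΩ hp)⟩

lemma exists_closedBall_ae_exists_tendsto (hR : ∀ α ∈ R, ⟪α, α⟫ = (2 : ℝ)) (hRp : Rp ⊆ R)
    (hE : ∀ α ∈ Rp, Set.MapsTo (reflAt α) E E) (ha : 0 < a) (hh : 0 < h)
    (hu : KHarmonicOn R Rp κ u (sawtooth E a h)) (hub : ∀ p ∈ sawtooth E a h, |u p| ≤ M)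
    {x₀ : Ed d} (hx₀ : isRegular R x₀) :
    ∃ r > 0, ∀ᵐ x : Ed d, x ∈ closure E ∩ closedBall x₀ r →
      ∃ L : ℝ, Tendsto u (𝓝[cone a x] (x, 0)) (𝓝 L) := by
  obtain ⟨ρ, hρ, hρR⟩ := nhds_basis_closedBall.mem_iff.1 (isOpen_setOf_isRegular.mem_nhds hx₀)
  set F := closure E ∩ closedBall x₀ (ρ / 2)
  have hF : IsCompact F := (isCompact_closedBall _ _).inter_left isClosed_closure
  obtain ⟨h', hh', hh'h, hh'ρ⟩ : ∃ h' > 0, 2 * h' ≤ h ∧ a * (2 * h') ≤ ρ / 2 :=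
    ⟨min (h / 2) (ρ / (4 * a)), by positivity, by linarith [min_le_left (h / 2) (ρ / (4 * a))], by
      have := (le_div_iff₀ (by positivity)).1 (min_le_right (h / 2) (ρ / (4 * a)))
      linarith⟩
  have hsub : sawtooth F a (2 * h') ⊆ sawtooth E a h := by
    rw [← sawtooth_closure (E := E)]
    exact sawtooth_mono Set.inter_subset_left hh'h
  have hFball : sawtooth F a (2 * h') ⊆ closedBall x₀ ρ ×ˢ Set.Icc 0 (2 * h') :=
    (sawtooth_subset_closedBall_prod Set.inter_subset_right ha.le).trans
      (Set.prod_mono_left (closedBall_subset_closedBall (by linarith)))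
  obtain ⟨C, hC, hWu⟩ := exists_laplacianBoundedOn_sqrtDunklWeight_mul
    ((isCompact_closedBall x₀ ρ).prod isCompact_Icc)
    (fun p hp α hα => hρR hp.1 α (hRp hα)) isOpen_sawtooth hFball
    ⟨hu.1.mono hsub, fun p hp _ => hu.2 p (hsub hp) (hρR (hFball hp).1)⟩
    (fun p hp => hub p (hsub hp))
    (fun p hp α hα => hub _ (reflAt_mem_sawtooth (hR α (hRp hα)) (hE α hα) (hsub hp)))
  refine ⟨ρ / 2, by positivity, ?_⟩
  filter_upwards [hWu.ae_exists_tendsto hF ha hh' hC] with x hx hxF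
  exact exists_tendsto_of_sqrtDunklWeight_mul
    (fun α hα => hρR (closedBall_subset_closedBall (by linarith) hxF.2) α (hRp hα)) (hx hxF)

theorem dunkl_bounded_on_cones_imp_limit_general (hR : ∀ α ∈ R, ⟪α, α⟫ = (2 : ℝ))
    (hRp : Rp ⊆ R) (hE : ∀ α ∈ Rp, Set.MapsTo (reflAt α) E E) (ha : 0 < a) (hh : 0 < h)
    (hu : KHarmonicOn R Rp κ u (sawtooth E a h)) (hub : ∀ p ∈ sawtooth E a h, |u p| ≤ M) :
    ∀ᵐ x : Ed d, x ∈ closure E → ∃ L : ℝ, Tendsto u (𝓝[cone a x] (x, 0)) (𝓝 L) := by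
  set N := {x | isRegular R x ∧ ¬(x ∈ closure E → ∃ L, Tendsto u (𝓝[cone a x] (x, 0)) (𝓝 L))}
  have hN : volume N = 0 := measure_null_of_locally_null N fun x₀ hx₀ => by
    obtain ⟨r, hr, hlim⟩ := exists_closedBall_ae_exists_tendsto hR hRp hE ha hh hu hub hx₀.1
    refine ⟨N ∩ closedBall x₀ r, inter_mem_nhdsWithin _ (closedBall_mem_nhds _ hr),
      measure_mono_null ?_ (ae_iff.1 hlim)⟩
    exact fun x hx hxlim => hx.1.2 fun hxE => hxlim ⟨hxE, hx.2⟩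
  have hRne (α : Ed d) (hα : α ∈ R) : α ≠ 0 := fun h0 => by simpa [h0] using hR α hα
  filter_upwards [ae_isRegular hRne, measure_eq_zero_iff_ae_notMem.1 hN] with x hx hxN
  exact of_not_not fun hlim => hxN ⟨hx, hlim⟩

end DunklHarmonic

/-- **Lemma 4.7.** Let `E ⊆ ℝ^d` be `G`-invariant and compact and `u` `κ`-harmonic in
`ℝ^{d+1}₊` with `|u| ≤ 1` on `Ω = ⋃_{x⁰∈E} Γ_a^2(x⁰)`. Then for a.e. `x ∈ E`, `u(t,y)`
has a finite limit as `(t,y) ∈ Γ_a(x)` tends to `(x,0)`. -/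
theorem dunkl_bounded_on_cones_imp_limit
    {d : ℕ} (hd : 1 ≤ d) (R Rp : Finset (Ed d)) (κ : Ed d → ℝ)
    (hRS : IsRootSystem R Rp κ)
    (E : Set (Ed d)) (hEc : IsCompact E) (hEinv : GInvSet R E)
    (u : Ed d × ℝ → ℝ) (hu : KHarmonicOn R Rp κ u (upperHS d))
    (a : ℝ) (ha : 0 < a)
    (hubd : ∀ p ∈ ⋃ x0 ∈ E, coneT a 2 x0, |u p| ≤ 1) :
    ∀ᵐ x : Ed d, x ∈ E → ∃ L : ℝ,
      Tendsto u (𝓝[cone a x] (x, (0 : ℝ))) (𝓝 L) := by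
  filter_upwards [dunkl_bounded_on_cones_imp_limit_general hRS.norm_two hRS.pos_sub
    (fun α hα => hEinv.mapsTo_reflAt (hRS.pos_sub hα)) ha two_pos
    (hu.mono fun p hp => (mem_sawtooth.1 hp).1) hubd] with x hx hxE
  exact hx (subset_closure hxE)

end
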